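/- For n ≥ 5, the minimum number m such that every bridgeless graph of order n with at least m edges has an orientation of diameter at most n - 2 equals n + 3. That is: every bridgeless graph of order n with at least n + 3 edges has such an orientation, and there exists a bridgeless graph of order n with n + 2 edges that does not. -/

import Mathlib

open SimpleGraph

/-- `R` is an orientation of the simple graph `G`: every arc of `R` lies on an edge of `G`,
and every edge of `G` receives exactly one of its two possible directions. -/
def IsOrientation {V : Type*} (G : SimpleGraph V) (R : V → V → Prop) : Prop :=
  (∀ u v, R u v → G.Adj u v) ∧ ∀ u v, G.Adj u v → (R u v ↔ ¬ R v u)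

/-- `RelPow R k u v` : there is a directed walk of length `k` from `u` to `v`. -/
def RelPow {V : Type*} (R : V → V → Prop) : ℕ → V → V → Prop
  | 0, u, v => u = v
  | n + 1, u, v => ∃ w, R u w ∧ RelPow R n w v

/-- The digraph `R` has diameter at most `d`: any vertex can reach any other by a
directed walk of length at most `d`. -/
def DiamLE {V : Type*} (R : V → V → Prop) (d : ℕ) : Prop :=
  ∀ u v, ∃ k ≤ d, RelPow R k u v

/-- A digraph is strongly connected if every vertex can reach every other. -/
def StronglyConnected {V : Type*} (R : V → V → Prop) : Prop :=
  ∀ u v, Relation.ReflTransGen R u v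

/-- A graph is bridgeless if it is connected and contains no bridge. -/
def Bridgeless {V : Type*} (G : SimpleGraph V) : Prop :=
  G.Connected ∧ ∀ e, ¬ G.IsBridge e

/-- The graph `G_{n,d}`: the path `u_1 … u_d` is the set of indices `0,…,d-1`,
the clique `K_{n-d-1}` is the set of indices `d,…,n-2`, both endpoints `0` and `d-1`
of the path are joined to all clique vertices, and the extra vertex `u_3'` is the
index `n-1`, joined to `u_2, u_3, u_4`, i.e. to indices `1, 2, 3`. -/
def Gnd (n d : ℕ) : SimpleGraph (Fin n) :=
  SimpleGraph.fromRel (fun i j =>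
    ((i : ℕ) + 1 = (j : ℕ) ∧ (j : ℕ) < d) ∨
    (d ≤ (i : ℕ) ∧ (i : ℕ) < n - 1 ∧ d ≤ (j : ℕ) ∧ (j : ℕ) < n - 1) ∨
    (((i : ℕ) = 0 ∨ (i : ℕ) = d - 1) ∧ d ≤ (j : ℕ) ∧ (j : ℕ) < n - 1) ∨
    ((i : ℕ) = n - 1 ∧ ((j : ℕ) = 1 ∨ (j : ℕ) = 2 ∨ (j : ℕ) = 3)))

/-- The graph `H_{n,n-2}`: the cycle `u_1 … u_{n-1} u_1` is the set of indices
`0,…,n-2` in cyclic order, and the extra vertex `u_3'` is the index `n-1`,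
joined to `u_2, u_3, u_4`, i.e. to indices `1, 2, 3`. -/
def Hgraph (n : ℕ) : SimpleGraph (Fin n) :=
  SimpleGraph.fromRel (fun i j =>
    ((i : ℕ) + 1 = (j : ℕ) ∧ (j : ℕ) ≤ n - 2) ∨
    ((i : ℕ) = 0 ∧ (j : ℕ) = n - 2) ∨
    ((i : ℕ) = n - 1 ∧ ((j : ℕ) = 1 ∨ (j : ℕ) = 2 ∨ (j : ℕ) = 3)))

/-!
If a strong orientation of a graph on `n` vertices has diameter greater than `n - 2`, breadth-first
search numbers its vertices along a Hamiltonian directed path so that every arc rises by at most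
one. Consider an oriented subgraph which admits no such numbering and each of whose arcs lies on a
directed cycle of it. By Robbins' theorem for mixed graphs it extends to a strong orientation, which
then has diameter at most `n - 2`. So start from any strong orientation: either it is good, or it
supplies a Hamiltonian path of the underlying graph, and the chords of this path, of which there are
at least four and which jointly cover the path, provide such a subgraph.

The graph `Hgraph n` is a subdivision of `K₄`, and up to reversal the arcs at its branch vertices
can be directed in six ways, each of which leaves room for a numbering.
-/

section Digraph

variable {V : Type*} {R : V → V → Prop}

theorem RelPow.snoc {k : ℕ} {u v w : V} (h : RelPow R k u v) (hvw : R v w) :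
    RelPow R (k + 1) u w := by
  induction k generalizing u with
  | zero => cases h; exact ⟨w, hvw, rfl⟩
  | succ k ih =>
    obtain ⟨x, hux, hxv⟩ := h
    exact ⟨x, hux, ih hxv⟩

theorem RelPow.exists_of_succ {k : ℕ} {u w : V} (h : RelPow R (k + 1) u w) :
    ∃ v, RelPow R k u v ∧ R v w := by
  induction k generalizing u with
  | zero =>
    obtain ⟨x, hux, rfl⟩ := h
    exact ⟨u, rfl, hux⟩
  | succ k ih =>
    obtain ⟨x, hux, hxw⟩ := h
    obtain ⟨v, hxv, hvw⟩ := ih hxw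
    exact ⟨v, ⟨x, hux, hxv⟩, hvw⟩

theorem RelPow.swap {k : ℕ} {u v : V} (h : RelPow R k u v) : RelPow (Function.swap R) k v u := by
  induction k generalizing u with
  | zero => exact h.symm
  | succ k ih =>
    obtain ⟨x, hux, hxv⟩ := h
    exact (ih hxv).snoc hux

theorem RelPow.le_add_of_forall_le_add_one {φ : V → ℤ} (hφ : ∀ x y, R x y → φ y ≤ φ x + 1)
    {k : ℕ} {u v : V} (h : RelPow R k u v) : φ v ≤ φ u + k := by
  induction k generalizing u with
  | zero => cases h; simp
  | succ k ih =>
    obtain ⟨x, hux, hxv⟩ := h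
    have := ih hxv
    have := hφ _ _ hux
    push_cast
    linarith

theorem exists_relPow_of_reflTransGen {u v : V} (h : Relation.ReflTransGen R u v) :
    ∃ k, RelPow R k u v := by
  induction h with
  | refl => exact ⟨0, rfl⟩
  | tail _ hvw ih => exact ih.imp' (· + 1) fun _ h => h.snoc hvw

theorem DiamLE.stronglyConnected {d : ℕ} (hd : DiamLE R d) : StronglyConnected R := by
  intro u v
  obtain ⟨k, -, h⟩ := hd u v
  induction k generalizing u with
  | zero => exact h ▸ .refl
  | succ k ih =>
    obtain ⟨w, huw, hwv⟩ := h
    exact .head huw (ih w hwv)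

theorem DiamLE.swap {d : ℕ} (hd : DiamLE R d) : DiamLE (Function.swap R) d := fun u v =>
  (hd v u).imp fun _ ⟨hk, h⟩ => ⟨hk, h.swap⟩

theorem DiamLE.le_add_of_forall_le_add_one {d : ℕ} (hd : DiamLE R d) {φ : V → ℤ}
    (hφ : ∀ x y, R x y → φ y ≤ φ x + 1) (u v : V) : φ v ≤ φ u + d := by
  obtain ⟨k, hk, h⟩ := hd u v
  have := h.le_add_of_forall_le_add_one hφ
  omega

theorem StronglyConnected.exists_arc_of_mem_of_notMem (hR : StronglyConnected R) {S : Set V}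
    {u v : V} (hu : u ∈ S) (hv : v ∉ S) : ∃ x ∈ S, ∃ y ∉ S, R x y := by
  by_contra! h
  have hS (w : V) (huw : Relation.ReflTransGen R u w) : w ∈ S := by
    induction huw with
    | refl => exact hu
    | tail _ hxy ih => exact not_not.1 fun hy => h _ ih _ hy hxy
  exact hv (hS v (hR u v))

theorem StronglyConnected.exists_arc_from [Nontrivial V] (hR : StronglyConnected R) (v : V) :
    ∃ w, R v w := by
  obtain ⟨u, hu⟩ := exists_ne v
  obtain ⟨x, rfl, y, -, h⟩ := hR.exists_arc_of_mem_of_notMem (S := {v}) rfl hu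
  exact ⟨y, h⟩

theorem reflTransGen_of_forall_exists_lt {r : V} (f : V → ℕ)
    (h : ∀ x, x ≠ r → ∃ y, R x y ∧ f y < f x) (x : V) : Relation.ReflTransGen R x r := by
  induction x using (measure f).wf.induction with
  | _ x ih =>
    by_cases hx : x = r
    · exact hx ▸ .refl
    · obtain ⟨y, hxy, hlt⟩ := h x hx
      exact .head hxy (ih y hlt)

/-- The distance in the digraph `R`, with junk value `0` when there is no directed walk. -/
noncomputable def directedDist (R : V → V → Prop) (u v : V) : ℕ :=
  sInf {k | RelPow R k u v}

theorem StronglyConnected.relPow_directedDist (hR : StronglyConnected R) (u v : V) :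
    RelPow R (directedDist R u v) u v :=
  Nat.sInf_mem (s := {k | RelPow R k u v}) (exists_relPow_of_reflTransGen (hR u v))

theorem RelPow.directedDist_le {k : ℕ} {u v : V} (h : RelPow R k u v) : directedDist R u v ≤ k :=
  Nat.sInf_le h

theorem StronglyConnected.directedDist_le_add_one (hR : StronglyConnected R) (u : V) {v w : V}
    (h : R v w) : directedDist R u w ≤ directedDist R u v + 1 :=
  ((hR.relPow_directedDist u v).snoc h).directedDist_le

theorem StronglyConnected.exists_arc_directedDist_eq (hR : StronglyConnected R) {u v : V} {k : ℕ}
    (hk : directedDist R u v = k + 1) : ∃ w, R w v ∧ directedDist R u w = k := by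
  obtain ⟨w, huw, hwv⟩ := (hk ▸ hR.relPow_directedDist u v).exists_of_succ
  have := huw.directedDist_le
  have := hR.directedDist_le_add_one u hwv
  exact ⟨w, hwv, by omega⟩

theorem StronglyConnected.exists_directedDist_eq (hR : StronglyConnected R) (u : V) {v : V} {k : ℕ}
    (hk : k ≤ directedDist R u v) : ∃ w, directedDist R u w = k :=
  Nat.decreasingInduction (motive := fun k _ => ∃ w, directedDist R u w = k)
    (fun _ _ ⟨_, hw⟩ => (hR.exists_arc_directedDist_eq hw).imp fun _ h => h.2) ⟨v, rfl⟩ hk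

/-- Breadth-first search: all distances from a vertex `u` witnessing the large diameter occur,
hence each exactly once. -/
theorem StronglyConnected.exists_numbering [Fintype V] (hR : StronglyConnected R)
    (hd : ¬ DiamLE R (Fintype.card V - 2)) :
    ∃ e : Fin (Fintype.card V) ≃ V, (∀ i j, R (e i) (e j) → (j : ℕ) ≤ i + 1) ∧
      ∀ i j : Fin (Fintype.card V), (i : ℕ) + 1 = j → R (e i) (e j) := by
  simp only [DiamLE, not_forall, not_exists, not_and] at hd
  obtain ⟨u, v, huv⟩ := hd
  have hlast : Fintype.card V - 1 ≤ directedDist R u v := by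
    by_contra! hlt
    exact huv _ (by omega) (hR.relPow_directedDist u v)
  choose g hg using fun i : Fin (Fintype.card V) =>
    hR.exists_directedDist_eq u (k := i) (v := v) (by omega)
  have hinj : Function.Injective g := fun i j hij => Fin.ext (by rw [← hg i, hij, hg j])
  let e := Equiv.ofBijective g
    ((Fintype.bijective_iff_injective_and_card g).2 ⟨hinj, Fintype.card_fin _⟩)
  have he (i) : directedDist R u (e i) = i := hg i
  refine ⟨e, fun i j hij => ?_, fun i j hij => ?_⟩
  · simpa only [he] using hR.directedDist_le_add_one u hij
  · obtain ⟨w, hwj, hw⟩ := hR.exists_arc_directedDist_eq (v := e j) ((he j).trans hij.symm)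
    obtain ⟨i', rfl⟩ := e.surjective w
    rwa [Fin.ext (hw.symm.trans (he i')) ]

end Digraph

section Robbins

variable {V : Type*} {G : SimpleGraph V} {R M N : V → V → Prop}

theorem IsOrientation.asymm (hR : IsOrientation G R) {u v : V} (h : R u v) : ¬ R v u :=
  (hR.2 u v (hR.1 u v h)).1 h

theorem IsOrientation.arc_or_arc (hR : IsOrientation G R) {u v : V} (h : G.Adj u v) :
    R u v ∨ R v u :=
  or_iff_not_imp_right.2 (hR.2 u v h).2

theorem IsOrientation.swap (hR : IsOrientation G R) : IsOrientation G (Function.swap R) :=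
  ⟨fun u v h => (hR.1 v u h).symm, fun u v h => hR.2 v u h.symm⟩

theorem StronglyConnected.of_forall_reflTransGen (hM : StronglyConnected M)
    (h : ∀ x y, M x y → Relation.ReflTransGen N x y) : StronglyConnected N := fun x y =>
  (hM x y).trans_induction_on (fun _ => .refl) (h _ _) fun _ _ => .trans

theorem StronglyConnected.swap (hM : StronglyConnected M) :
    StronglyConnected (Function.swap M) :=
  fun x y => Relation.reflTransGen_swap.2 (hM y x)

theorem StronglyConnected.reflTransGen_without_edge (hM : StronglyConnected M) (u v w : V) :
    Relation.ReflTransGen (fun x y => M x y ∧ s(x, y) ≠ s(u, v)) u w ∨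
      Relation.ReflTransGen (fun x y => M x y ∧ s(x, y) ≠ s(u, v)) v w := by
  induction hM u w with
  | refl => exact .inl .refl
  | @tail b c _ hbc ih =>
    by_cases hedge : s(b, c) = s(u, v)
    · rcases Sym2.eq_iff.1 hedge with ⟨-, rfl⟩ | ⟨-, rfl⟩
      exacts [.inr .refl, .inl .refl]
    · exact ih.imp (·.tail ⟨hbc, hedge⟩) (·.tail ⟨hbc, hedge⟩)

theorem StronglyConnected.reflTransGen_to_without_edge (hM : StronglyConnected M) (u v w : V) :
    Relation.ReflTransGen (fun x y => M x y ∧ s(x, y) ≠ s(u, v)) w u ∨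
      Relation.ReflTransGen (fun x y => M x y ∧ s(x, y) ≠ s(u, v)) w v := by
  have hswap {a b : V} (h : Relation.ReflTransGen
      (fun x y => Function.swap M x y ∧ s(x, y) ≠ s(u, v)) a b) :
      Relation.ReflTransGen (fun x y => M x y ∧ s(x, y) ≠ s(u, v)) b a :=
    .mono (fun x y h => ⟨h.1, Sym2.eq_swap ▸ h.2⟩) _ _ (Relation.reflTransGen_swap.2 h)
  exact (hM.swap.reflTransGen_without_edge u v w).imp hswap hswap

theorem StronglyConnected.bridgeless [Nonempty V] (hR : StronglyConnected R)
    (hadj : ∀ x y, R x y → G.Adj x y) (hasymm : ∀ x y, R x y → ¬ R y x) : Bridgeless G := by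
  have hreach {u v : V} (huv : ¬ R u v) : (G.deleteEdges {s(u, v)}).Reachable u v := by
    by_contra hno
    obtain ⟨x, hx, y, hy, hxy⟩ := hR.exists_arc_of_mem_of_notMem
      (S := {w | (G.deleteEdges {s(u, v)}).Reachable u w}) (Reachable.refl u) hno
    refine hy (hx.trans (Adj.reachable (deleteEdges_adj.2 ⟨hadj x y hxy, fun hedge => ?_⟩)))
    rcases Sym2.eq_iff.1 hedge with ⟨rfl, rfl⟩ | ⟨rfl, -⟩
    exacts [huv hxy, hno hx]
  refine ⟨⟨fun u v => (G.reachable_iff_reflTransGen u v).2 (.mono hadj _ _ (hR u v))⟩, ?_⟩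
  rintro ⟨u, v⟩
  rw [isBridge_iff, not_not]
  by_cases huv : R u v
  · rw [Sym2.eq_swap]
    exact (hreach (hasymm u v huv)).symm
  · exact hreach huv

theorem Bridgeless.reflTransGen_without_edge (hG : Bridgeless G) (hM : StronglyConnected M)
    (hGM : ∀ x y, G.Adj x y → M x y ∨ M y x) (u v : V) :
    Relation.ReflTransGen (fun x y => M x y ∧ s(x, y) ≠ s(u, v)) u v ∨
      Relation.ReflTransGen (fun x y => M x y ∧ s(x, y) ≠ s(u, v)) v u := by
  by_contra! hno
  obtain ⟨huv, hvu⟩ := hno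
  have hreach := hG.2 s(u, v)
  rw [isBridge_iff, not_not] at hreach
  obtain ⟨p⟩ := hreach
  obtain ⟨⟨⟨x, y⟩, hadj⟩, -, hx, hy⟩ := p.exists_boundary_dart
    {w | Relation.ReflTransGen (fun x y => M x y ∧ s(x, y) ≠ s(u, v)) u w} .refl huv
  obtain ⟨hxy, hedge⟩ := deleteEdges_adj.1 hadj
  rcases hGM x y hxy with h | h
  · exact hy (hx.tail ⟨h, hedge⟩)
  · have hvx : Relation.ReflTransGen (fun x y => M x y ∧ s(x, y) ≠ s(u, v)) v x :=
      ((hM.reflTransGen_without_edge u v y).resolve_left hy).tail ⟨h, Sym2.eq_swap ▸ hedge⟩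
    rcases hM.reflTransGen_to_without_edge u v x with hback | hback
    exacts [hvu (hvx.trans hback), huv (hx.trans hback)]

/-- A minimal strongly connected subdigraph of `M` that still covers every edge of `G` is an
orientation: of two opposite arcs one can be bypassed, since their edge is not a bridge. -/
theorem Bridgeless.exists_orientation_le [Finite V] (hG : Bridgeless G)
    (hM : StronglyConnected M) (hMG : ∀ x y, M x y → G.Adj x y)
    (hGM : ∀ x y, G.Adj x y → M x y ∨ M y x) :
    ∃ R ≤ M, IsOrientation G R ∧ StronglyConnected R := by
  obtain ⟨R, hRM, ⟨hR, hGR⟩, hmin⟩ := (Set.toFinite {N | StronglyConnected N ∧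
    ∀ x y, G.Adj x y → N x y ∨ N y x}).exists_le_minimal ⟨hM, hGM⟩
  have hdelete {u v : V} (hvu : R v u) (hne : u ≠ v)
      (hwalk : Relation.ReflTransGen (fun x y => R x y ∧ s(x, y) ≠ s(u, v)) u v) : ¬ R u v := by
    intro huv
    refine (hmin (y := fun x y => R x y ∧ ¬ (x = u ∧ y = v)) ⟨?_, fun x y hxy => ?_⟩
      (fun x y h => h.1) u v huv).2 ⟨rfl, rfl⟩
    · refine hR.of_forall_reflTransGen fun x y hxy => ?_
      by_cases h : x = u ∧ y = v
      · rw [h.1, h.2]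
        exact .mono (fun x y h => ⟨h.1, fun hxy => h.2 (by rw [hxy.1, hxy.2])⟩) _ _ hwalk
      · exact .single ⟨hxy, h⟩
    · grind
  refine ⟨R, hRM, ⟨fun x y h => hMG x y (hRM x y h), fun u v huv =>
    ⟨fun h h' => ?_, fun h => (hGR u v huv).resolve_right h⟩⟩, hR⟩
  rcases hG.reflTransGen_without_edge hR hGR u v with hwalk | hwalk
  · exact hdelete h' huv.ne hwalk h
  · exact hdelete h huv.ne' (by simpa only [Sym2.eq_swap] using hwalk) h'

end Robbins

section Numbering

variable {V : Type*} {G : SimpleGraph V} {D : Set G.Dart} {pos : V → ℕ} {a b c v : V}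

/-- A numbering of the vertices along which every arc of `D` rises by at most one. A strong
orientation containing `D` of diameter at least `|V| - 1` provides one. -/
structure IsNumbering (D : Set G.Dart) (pos : V → ℕ) : Prop where
  injective : Function.Injective pos
  snd_le_add_one : ∀ d ∈ D, pos d.snd ≤ pos d.fst + 1

/-- An oriented subgraph, given by its set of arcs `D`, in which every arc lies on a directed
cycle and which admits no numbering. It forces every strong orientation of `G` containing `D`
to have small diameter. -/
structure IsObstruction (D : Set G.Dart) : Prop where
  symm_notMem : ∀ d ∈ D, d.symm ∉ D
  exists_return : ∀ d ∈ D, ∃ p : G.Walk d.snd d.fst, ∀ e ∈ p.darts, e ∈ D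
  not_isNumbering : ∀ pos, ¬ IsNumbering D pos

theorem IsObstruction.exists_orientation [Fintype V] (hG : Bridgeless G) (hD : IsObstruction D) :
    ∃ R : V → V → Prop, IsOrientation G R ∧ DiamLE R (Fintype.card V - 2) := by
  let M : V → V → Prop := fun x y => ∃ h : G.Adj x y, Dart.symm ⟨(x, y), h⟩ ∉ D
  have hreturn {x y : V} (p : G.Walk x y) (hp : ∀ d ∈ p.darts, d ∈ D) :
      Relation.ReflTransGen M x y := by
    induction p with
    | nil => exact .refl
    | cons h p ih =>
      simp only [Walk.darts_cons, List.forall_mem_cons] at hp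
      exact (ih hp.2).head ⟨h, hD.symm_notMem _ hp.1⟩
  have hM : StronglyConnected M := by
    refine StronglyConnected.of_forall_reflTransGen
      (fun x y => (reachable_iff_reflTransGen x y).1 (hG.1.preconnected x y)) fun x y hxy => ?_
    by_cases hsymm : Dart.symm ⟨(x, y), hxy⟩ ∈ D
    · obtain ⟨p, hp⟩ := hD.exists_return _ hsymm
      exact hreturn p hp
    · exact .single ⟨hxy, hsymm⟩
  have hGM (x y : V) (hxy : G.Adj x y) : M x y ∨ M y x :=
    or_iff_not_imp_left.2 fun h => ⟨hxy.symm, fun hmem => h ⟨hxy, hD.symm_notMem _ hmem⟩⟩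
  obtain ⟨R, hRM, hGR, hR⟩ := hG.exists_orientation_le hM (fun x y h => h.1) hGM
  refine ⟨R, hGR, by_contra fun hd => ?_⟩
  obtain ⟨e, hle, -⟩ := hR.exists_numbering hd
  refine hD.not_isNumbering (fun x => e.symm x) ⟨Fin.val_injective.comp e.symm.injective,
    fun d hdD => hle _ _ ?_⟩
  simp only [Equiv.apply_symm_apply]
  exact (hGR.2 _ _ d.adj).2 fun h => (hRM _ _ h).2 hdD

theorem IsObstruction.map {W : Type*} {H : SimpleGraph W} (f : G ↪g H) (hD : IsObstruction D) :
    IsObstruction (f.toHom.mapDart '' D) where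
  symm_notMem := by
    rintro _ ⟨d, hd, rfl⟩ ⟨e, he, hed⟩
    obtain rfl : e = d.symm := Dart.ext _ _ (Prod.ext
      (f.injective (congrArg (·.fst) hed)) (f.injective (congrArg (·.snd) hed)))
    exact hD.symm_notMem _ hd he
  exists_return := by
    rintro _ ⟨d, hd, rfl⟩
    obtain ⟨p, hp⟩ := hD.exists_return d hd
    refine ⟨p.map f.toHom, fun e he => ?_⟩
    obtain ⟨d', hd', rfl⟩ := List.mem_map.1 (Walk.darts_map f.toHom p ▸ he)
    exact ⟨d', hp d' hd', rfl⟩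
  not_isNumbering pos hpos := hD.not_isNumbering (pos ∘ f)
    ⟨hpos.injective.comp f.injective, fun d hd => hpos.snd_le_add_one _ ⟨d, hd, rfl⟩⟩

/-- Only the arc from position `k` to position `k + 1` crosses the level `k` upwards. -/
theorem IsNumbering.exists_mem_darts (hpos : IsNumbering D pos) (p : G.Walk a b)
    (hp : ∀ d ∈ p.darts, d ∈ D) {k : ℕ} (ha : pos a ≤ k) (hb : k < pos b) :
    ∃ d ∈ p.darts, pos d.fst = k ∧ pos d.snd = k + 1 := by
  obtain ⟨d, hd, hfst, hsnd⟩ := p.exists_boundary_dart {x | pos x ≤ k} ha (not_le.2 hb)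
  have := hpos.snd_le_add_one d (hp d hd)
  simp only [Set.mem_ofPred_eq] at hfst hsnd
  exact ⟨d, hd, by omega, by omega⟩

theorem IsNumbering.exists_common_dart (hpos : IsNumbering D pos) {p : G.Walk a b} {q : G.Walk c v}
    (hp : ∀ d ∈ p.darts, d ∈ D) (hq : ∀ d ∈ q.darts, d ∈ D) {k : ℕ} (ha : pos a ≤ k)
    (hb : k < pos b) (hc : pos c ≤ k) (hv : k < pos v) :
    ∃ d ∈ p.darts, d ∈ q.darts ∧ pos d.fst = k ∧ pos d.snd = k + 1 := by
  obtain ⟨d, hd, hfst, hsnd⟩ := hpos.exists_mem_darts p hp ha hb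
  obtain ⟨e, he, hfst', hsnd'⟩ := hpos.exists_mem_darts q hq hc hv
  obtain rfl : d = e := Dart.ext _ _ (Prod.ext (hpos.injective (hfst.trans hfst'.symm))
    (hpos.injective (hsnd.trans hsnd'.symm)))
  exact ⟨d, hd, he, hfst, hsnd⟩

end Numbering

section Obstructions

variable {V : Type*} {G : SimpleGraph V} {D : Set G.Dart} {pos : V → ℕ} {a b c s t v : V}

/-- A list of arcs which never uses an edge in both directions. -/
def IsOriented (ds : List G.Dart) : Prop :=
  ∀ d ∈ ds, d.symm ∉ ds

/-- The graph contains an oriented subgraph without a numbering all of whose arcs lie on directed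
cycles. -/
def HasObstruction (G : SimpleGraph V) : Prop :=
  ∃ D : Set G.Dart, IsObstruction D

theorem exists_walks_of_mem_darts (p : G.Walk a b) {d : G.Dart} (hd : d ∈ p.darts) :
    ∃ (q : G.Walk a d.fst) (r : G.Walk d.snd b), p = q.append (.cons d.adj r) := by
  induction p with
  | nil => simp at hd
  | cons h p ih =>
    rcases List.mem_cons.1 hd with rfl | hd
    · exact ⟨.nil, p, rfl⟩
    · obtain ⟨q, r, rfl⟩ := ih hd
      exact ⟨.cons h q, r, rfl⟩

theorem exists_walk_snd_fst_of_mem_darts (p : G.Walk v v) {d : G.Dart} (hd : d ∈ p.darts) :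
    ∃ q : G.Walk d.snd d.fst, q.darts ⊆ p.darts := by
  obtain ⟨q, r, hp⟩ := exists_walks_of_mem_darts p hd
  refine ⟨r.append q, ?_⟩
  rw [hp]
  simp only [Walk.darts_append, Walk.darts_cons, List.append_subset]
  grind

theorem hasObstruction_of_closedWalks (L : List (Σ v, G.Walk v v))
    (hL : IsOriented (L.flatMap fun w => w.2.darts))
    (hno : ∀ D pos, (∀ w ∈ L, ∀ d ∈ w.2.darts, d ∈ D) → ¬ IsNumbering (G := G) D pos) :
    HasObstruction G := by
  let D : Set G.Dart := {d | d ∈ L.flatMap fun w => w.2.darts}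
  refine ⟨D, fun d hd => hL d hd, fun d hd => ?_, fun pos =>
    hno D pos fun w hw d hd => List.mem_flatMap.2 ⟨w, hw, hd⟩⟩
  obtain ⟨w, hw, hdw⟩ := List.mem_flatMap.1 hd
  obtain ⟨q, hq⟩ := exists_walk_snd_fst_of_mem_darts w.2 hdw
  exact ⟨q, fun e he => List.mem_flatMap.2 ⟨w, hw, hq he⟩⟩

theorem IsNumbering.le_of_fork (hpos : IsNumbering D pos) {p q : G.Walk a b}
    (hp : ∀ d ∈ p.darts, d ∈ D) (hq : ∀ d ∈ q.darts, d ∈ D)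
    (hpq : ∀ d ∈ p.darts, d ∈ q.darts → d.fst ≠ a) : pos b ≤ pos a := by
  by_contra! hlt
  obtain ⟨d, hdp, hdq, hfst, -⟩ := hpos.exists_common_dart hp hq le_rfl hlt le_rfl hlt
  exact hpq d hdp hdq (hpos.injective hfst)

theorem IsNumbering.le_of_join (hpos : IsNumbering D pos) {p q : G.Walk a b}
    (hp : ∀ d ∈ p.darts, d ∈ D) (hq : ∀ d ∈ q.darts, d ∈ D)
    (hpq : ∀ d ∈ p.darts, d ∈ q.darts → d.snd ≠ b) : pos b ≤ pos a := by
  by_contra! hlt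
  obtain ⟨d, hdp, hdq, -, hsnd⟩ := hpos.exists_common_dart hp hq (k := pos b - 1)
    (by omega) (by omega) (by omega) (by omega)
  exact hpq d hdp hdq (hpos.injective (by omega))

theorem IsNumbering.exists_mem_darts_closedWalk (hpos : IsNumbering D pos) (p : G.Walk v v)
    (hp : ∀ d ∈ p.darts, d ∈ D) (hnil : ¬ p.Nil) :
    ∃ d ∈ p.darts, pos d.snd = pos d.fst + 1 ∧ (d.fst = v ∨ d.snd = v) := by
  obtain ⟨u, h, q, rfl⟩ := Walk.not_nil_iff.1 hnil
  rcases lt_or_gt_of_ne (hpos.injective.ne h.ne) with hlt | hlt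
  · obtain ⟨d, hd, hfst, hsnd⟩ := hpos.exists_mem_darts (.cons h .nil)
      (fun d hd => hp d (by simp_all)) le_rfl hlt
    exact ⟨d, by simp_all, by omega, .inl (hpos.injective hfst)⟩
  · obtain ⟨d, hd, hfst, hsnd⟩ := hpos.exists_mem_darts q (fun d hd => hp d (by simp_all))
      (k := pos v - 1) (by omega) (by omega)
    exact ⟨d, by simp_all, by omega, .inr (hpos.injective (by omega))⟩

theorem IsNumbering.dart_eq_of_eq_add_one (hpos : IsNumbering D pos) {d e : G.Dart}
    (hd : pos d.snd = pos d.fst + 1) (he : pos e.snd = pos e.fst + 1)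
    (h : d.fst = e.fst ∨ d.snd = e.snd) : d = e :=
  Dart.ext _ _ (Prod.ext (hpos.injective (by grind)) (hpos.injective (by grind)))

theorem hasObstruction_of_forks (hab : a ≠ b) (p₁ p₂ : G.Walk a b) (q₁ q₂ : G.Walk b a)
    (hp : ∀ d ∈ p₁.darts, d ∈ p₂.darts → d.fst ≠ a)
    (hq : ∀ d ∈ q₁.darts, d ∈ q₂.darts → d.fst ≠ b)
    (hor : IsOriented (p₁.darts ++ p₂.darts ++ q₁.darts ++ q₂.darts)) : HasObstruction G := by
  refine hasObstruction_of_closedWalks [⟨a, p₁.append q₁⟩, ⟨a, p₂.append q₂⟩] ?_ ?_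
  · simpa [IsOriented, or_assoc, or_comm, or_left_comm] using hor
  · intro D pos hD hpos
    simp only [List.forall_mem_cons, Walk.darts_append, List.forall_mem_append] at hD
    obtain ⟨⟨hp₁, hq₁⟩, ⟨hp₂, hq₂⟩, -⟩ := hD
    exact hab (hpos.injective
      ((hpos.le_of_fork hq₁ hq₂ hq).antisymm (hpos.le_of_fork hp₁ hp₂ hp)))

/-- The two walks from `s` to `t` force `pos t ≤ pos v ≤ pos s`, so `p` rises into `v` and `q` rises
out of `v`, which leaves no rising arc at `v` for `r`. -/
theorem hasObstruction_of_theta_loop {x y : G.Walk s t} {p : G.Walk t v} {q : G.Walk v s}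
    {r : G.Walk v v} (hsv : s ≠ v) (htv : t ≠ v) (hr : ¬ r.Nil) (hxy : x.darts.Disjoint y.darts)
    (hp : ∀ d ∈ p.darts, d.fst ≠ s) (hq : ∀ d ∈ q.darts, d.snd ≠ t)
    (hpr : p.darts.Disjoint r.darts) (hqr : q.darts.Disjoint r.darts)
    (hor : IsOriented (x.darts ++ y.darts ++ p.darts ++ q.darts ++ r.darts)) :
    HasObstruction G := by
  refine hasObstruction_of_closedWalks
    [⟨s, x.append (p.append q)⟩, ⟨s, y.append (p.append q)⟩, ⟨v, r⟩] ?_ ?_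
  · simpa [IsOriented, or_assoc, or_comm, or_left_comm] using hor
  intro D pos hD hpos
  simp only [List.forall_mem_cons, Walk.darts_append, List.forall_mem_append] at hD
  obtain ⟨⟨hxD, hpD, hqD⟩, ⟨hyD, -, -⟩, hrD, -⟩ := hD
  have hvs : pos v ≤ pos s := hpos.le_of_fork (p := x.append p) (q := y.append p)
    (by simp only [Walk.darts_append, List.mem_append]; grind)
    (by simp only [Walk.darts_append, List.mem_append]; grind)
    (by simp only [Walk.darts_append, List.mem_append]; grind [List.Disjoint])
  have htv' : pos t ≤ pos v := hpos.le_of_join (p := q.append x) (q := q.append y)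
    (by simp only [Walk.darts_append, List.mem_append]; grind)
    (by simp only [Walk.darts_append, List.mem_append]; grind)
    (by simp only [Walk.darts_append, List.mem_append]; grind [List.Disjoint])
  have := hpos.injective.ne hsv
  have := hpos.injective.ne htv
  obtain ⟨d, hd, hrise, hdv⟩ := hpos.exists_mem_darts_closedWalk r hrD hr
  rcases hdv with hdv | hdv
  · obtain ⟨e, he, hfst, hsnd⟩ := hpos.exists_mem_darts q hqD (k := pos v) le_rfl (by omega)
    obtain rfl := hpos.dart_eq_of_eq_add_one hrise (hsnd.trans (by rw [hfst]))
      (.inl (hdv ▸ hpos.injective hfst).symm)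
    exact hqr he hd
  · obtain ⟨e, he, hfst, hsnd⟩ := hpos.exists_mem_darts p hpD (k := pos v - 1) (by omega) (by omega)
    obtain rfl := hpos.dart_eq_of_eq_add_one hrise (hsnd.trans (by rw [hfst]))
      (.inr (hdv.trans (hpos.injective (by omega)).symm))
    exact hpr he hd

theorem IsNumbering.exists_mem_darts_snd_eq (hpos : IsNumbering D pos) (hsv : G.Adj s v)
    (hstep : pos v = pos s + 1) {p : G.Walk v s} (hp : ∀ d ∈ p.darts, d ∈ D)
    (hvs : ⟨(v, s), hsv.symm⟩ ∉ p.darts) (hv : ∀ d ∈ p.darts, d.fst = v → pos d.snd ≠ pos v + 1) :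
    ∃ d ∈ p.darts, pos d.snd = pos d.fst + 1 ∧ d.snd = s := by
  cases p with
  | nil => exact (hsv.ne rfl).elim
  | @cons _ u _ hvu p =>
    simp only [Walk.darts_cons, List.forall_mem_cons] at hp hv
    simp only [Walk.darts_cons, List.mem_cons, not_or] at hvs
    have hle := hpos.snd_le_add_one _ hp.1
    have hne : pos u ≠ pos v + 1 := hv.1 trivial
    have hus : u ≠ s := fun hus => hvs.1 (Dart.ext _ _ (Prod.ext rfl hus.symm))
    have := hpos.injective.ne hus
    have := hpos.injective.ne hvu.ne
    simp only at hle
    obtain ⟨d, hd, hfst, hsnd⟩ := hpos.exists_mem_darts p hp.2 (k := pos s - 1)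
      (by omega) (by omega)
    exact ⟨d, List.mem_cons_of_mem _ hd, by omega, hpos.injective (by omega)⟩

/-- The arc from `s` to `v` rises by one and `r` takes the rising arc out of `v`, so `x` and `y`
both have to pass below `s` and compete for the rising arc into `s`. -/
theorem hasObstruction_of_theta_loop_at_end (hsv : G.Adj s v) {x y : G.Walk v s}
    {r : G.Walk v v} (hr : ¬ r.Nil) (hxy : x.darts.Disjoint y.darts)
    (hxr : x.darts.Disjoint r.darts) (hyr : y.darts.Disjoint r.darts)
    (hsvr : ⟨(s, v), hsv⟩ ∉ r.darts)
    (hor : IsOriented (⟨(s, v), hsv⟩ :: (x.darts ++ y.darts ++ r.darts))) :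
    HasObstruction G := by
  refine hasObstruction_of_closedWalks [⟨s, .cons hsv x⟩, ⟨s, .cons hsv y⟩, ⟨v, r⟩] ?_ ?_
  · simpa [IsOriented, or_assoc, or_comm, or_left_comm] using hor
  intro D pos hD hpos
  simp only [List.forall_mem_cons, Walk.darts_cons] at hD
  obtain ⟨⟨hsvD, hxD⟩, ⟨-, hyD⟩, hrD, -⟩ := hD
  have hle : pos s ≤ pos v := hpos.le_of_fork hxD hyD fun d hdx hdy => (hxy hdx hdy).elim
  have hstep : pos v = pos s + 1 :=
    le_antisymm (hpos.snd_le_add_one _ hsvD) (hle.lt_of_ne (hpos.injective.ne hsv.ne))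
  obtain ⟨d, hd, hrise, hdv⟩ := hpos.exists_mem_darts_closedWalk r hrD hr
  have hdv : d.fst = v := hdv.resolve_right fun h =>
    hsvr (hpos.dart_eq_of_eq_add_one (e := ⟨(s, v), hsv⟩) hrise hstep (.inr h) ▸ hd)
  have hv (e : G.Dart) (he : e ∉ r.darts) (hev : e.fst = v) : pos e.snd ≠ pos v + 1 := fun h =>
    he (hpos.dart_eq_of_eq_add_one hrise (h.trans (by rw [hev])) (.inl (hdv.trans hev.symm)) ▸ hd)
  have hsymm := hor _ List.mem_cons_self
  simp only [List.mem_cons, List.mem_append, not_or] at hsymm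
  obtain ⟨e, he, hrise_e, hes⟩ := hpos.exists_mem_darts_snd_eq hsv hstep hxD hsymm.2.1.1
    fun e he => hv e (hxr he)
  obtain ⟨f, hf, hrise_f, hfs⟩ := hpos.exists_mem_darts_snd_eq hsv hstep hyD hsymm.2.1.2
    fun f hf => hv f (hyr hf)
  exact hxy he (hpos.dart_eq_of_eq_add_one hrise_e hrise_f (.inr (hes.trans hfs.symm)) ▸ hf)

theorem IsNumbering.lt_of_closedWalks (hpos : IsNumbering D pos) (hab : G.Adj a b)
    {p : G.Walk b a} {q : G.Walk a a} {r : G.Walk b b} (hp : v ∈ p.support) (hva : v ≠ a)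
    (hvb : v ≠ b) (hpD : ∀ d ∈ (Walk.cons hab p).darts, d ∈ D) (hqD : ∀ d ∈ q.darts, d ∈ D)
    (hrD : ∀ d ∈ r.darts, d ∈ D) (hq : ¬ q.Nil) (hr : ¬ r.Nil)
    (hpq : (Walk.cons hab p).darts.Disjoint q.darts)
    (hpr : (Walk.cons hab p).darts.Disjoint r.darts) : pos b < pos a := by
  classical
  simp only [Walk.darts_cons, List.forall_mem_cons] at hpD
  refine lt_of_not_ge fun hle => ?_
  have hab' := hle.lt_of_ne (hpos.injective.ne hab.ne)
  have hstep : pos b = pos a + 1 := le_antisymm (hpos.snd_le_add_one _ hpD.1) hab'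
  obtain ⟨d, hd, hd', hda⟩ := hpos.exists_mem_darts_closedWalk q hqD hq
  obtain ⟨e, he, he', heb⟩ := hpos.exists_mem_darts_closedWalk r hrD hr
  have hdab : d ≠ ⟨(a, b), hab⟩ := fun h => hpq (h ▸ List.mem_cons_self) hd
  have heab : e ≠ ⟨(a, b), hab⟩ := fun h => hpr (h ▸ List.mem_cons_self) he
  have hda : d.snd = a := hda.resolve_left fun h =>
    hdab (hpos.dart_eq_of_eq_add_one hd' hstep (.inl h))
  have heb : e.fst = b := heb.resolve_right fun h =>
    heab (hpos.dart_eq_of_eq_add_one he' hstep (.inr h))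
  have := hpos.injective.ne hva
  have := hpos.injective.ne hvb
  rcases lt_or_ge (pos b) (pos v) with hv | hv
  · obtain ⟨f, hf, hfst, hsnd⟩ := hpos.exists_mem_darts (p.takeUntil v hp)
      (fun f hf => hpD.2 f (p.darts_takeUntil_subset_darts hp hf)) le_rfl hv
    have : e = f := hpos.dart_eq_of_eq_add_one he' (hsnd.trans (by rw [hfst]))
      (.inl (hpos.injective (by rw [heb, hfst])))
    exact hpr (List.mem_cons_of_mem _ (p.darts_takeUntil_subset_darts hp hf)) (this ▸ he)
  · obtain ⟨f, hf, hfst, hsnd⟩ := hpos.exists_mem_darts (p.dropUntil v hp)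
      (fun f hf => hpD.2 f (p.darts_dropUntil_subset_darts hp hf)) (k := pos a - 1)
      (by omega) (by omega)
    have : d = f := hpos.dart_eq_of_eq_add_one hd' (by omega)
      (.inr (hpos.injective (by rw [hda]; omega)))
    exact hpq (List.mem_cons_of_mem _ (p.darts_dropUntil_subset_darts hp hf)) (this ▸ hd)

/-- Both `p` and `q` would have to use the rising arc out of `b`. -/
theorem hasObstruction_of_closedWalk_chain (hab : G.Adj a b) (hcb : G.Adj c b) {p : G.Walk b a}
    {q : G.Walk b c} {ra : G.Walk a a} {rc : G.Walk c c} (hp : s ∈ p.support) (hsa : s ≠ a)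
    (hsb : s ≠ b) (hq : t ∈ q.support) (htb : t ≠ b) (htc : t ≠ c)
    (hra : ¬ ra.Nil) (hrc : ¬ rc.Nil)
    (hpq : (Walk.cons hab p).darts.Disjoint (Walk.cons hcb q).darts)
    (hpra : (Walk.cons hab p).darts.Disjoint ra.darts)
    (hqrc : (Walk.cons hcb q).darts.Disjoint rc.darts)
    (hor : IsOriented ((Walk.cons hab p).darts ++ (Walk.cons hcb q).darts ++ ra.darts ++
      rc.darts)) : HasObstruction G := by
  refine hasObstruction_of_closedWalks
    [⟨a, .cons hab p⟩, ⟨c, .cons hcb q⟩, ⟨a, ra⟩, ⟨c, rc⟩] (by simpa using hor) ?_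
  intro D pos hD hpos
  simp only [List.forall_mem_cons] at hD
  obtain ⟨hpD, hqD, hraD, hrcD, -⟩ := hD
  have hba : pos b < pos a := hpos.lt_of_closedWalks hab hp hsa hsb hpD hraD
    (r := q.append (.cons hcb .nil)) (by simp_all [or_imp, forall_and]) hra (by simp) hpra
    (by simp_all [List.Disjoint])
  have hbc : pos b < pos c := hpos.lt_of_closedWalks hcb hq htc htb hqD hrcD
    (r := p.append (.cons hab .nil)) (by simp_all [or_imp, forall_and]) hrc (by simp) hqrc
    (by simp_all [List.Disjoint]; grind)
  simp only [Walk.darts_cons, List.forall_mem_cons] at hpD hqD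
  obtain ⟨d, hdp, hdq, -⟩ := hpos.exists_common_dart hpD.2 hqD.2 le_rfl hba le_rfl hbc
  exact hpq (List.mem_cons_of_mem _ hdp) (List.mem_cons_of_mem _ hdq)

end Obstructions

section Theta

variable {V : Type*} {G : SimpleGraph V} {a b m m' s t v x x' y y' z : V}

theorem isOriented_of_nodup {ds : List G.Dart} (hds : (ds.map Dart.edge).Nodup) :
    IsOriented ds := fun d hd hsymm =>
  d.symm_ne (List.inj_on_of_nodup_map hds hsymm hd d.edge_symm)

theorem IsOriented.mono {ds es : List G.Dart} (hes : IsOriented es) (h : ds ⊆ es) :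
    IsOriented ds := fun d hd hsymm => hes d (h hd) (h hsymm)

theorem nodup_of_count_le {α : Type*} [DecidableEq α] {l l' : List α}
    (h : ∀ c, l.count c ≤ l'.count c) (hl' : l'.Nodup) : l.Nodup :=
  List.nodup_iff_count_le_one.2 fun c => (h c).trans (List.nodup_iff_count_le_one.1 hl' c)

theorem forall_darts_fst_ne {r : G.Walk a b} (hv : v ∉ r.support) : ∀ d ∈ r.darts, d.fst ≠ v :=
  fun _ hd hdv => hv (hdv ▸ r.dart_fst_mem_support_of_mem_darts hd)

theorem hasObstruction_of_disjoint_forks {p₁ p₂ : G.Walk a m} {p : G.Walk m b}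
    {q₁ q₂ : G.Walk b m'} {q : G.Walk m' a} (ha : a ∉ p.support) (hb : b ∉ q.support)
    (hnd : (p₁.edges ++ p₂.edges ++ p.edges ++ q₁.edges ++ q₂.edges ++ q.edges).Nodup) :
    HasObstruction G := by
  simp only [Walk.edges, ← List.map_append] at hnd
  have hor := isOriented_of_nodup hnd
  replace hnd := hnd.of_map
  have hp := forall_darts_fst_ne ha
  have hq := forall_darts_fst_ne hb
  simp only [List.nodup_append, List.mem_append] at hnd
  refine hasObstruction_of_forks (a := a) (b := b) (fun hab => ha (hab ▸ p.end_mem_support))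
    (p₁.append p) (p₂.append p) (q₁.append q) (q₂.append q) ?_ ?_ (hor.mono ?_)
  · simp only [Walk.darts_append, List.mem_append]
    grind
  · simp only [Walk.darts_append, List.mem_append]
    grind
  · intro d
    simp only [Walk.darts_append, List.mem_append]
    tauto

theorem notMem_support_right_of_isPath_append {p : G.Walk a m} {q : G.Walk m b}
    (h : (p.append q).IsPath) (hv : v ∈ p.support) (hvm : v ≠ m) : v ∉ q.support :=
  fun hq => h.ne_of_mem_support_of_append hvm hv hq rfl

theorem notMem_support_left_of_isPath_append {p : G.Walk a m} {q : G.Walk m b}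
    (h : (p.append q).IsPath) (hv : v ∈ q.support) (hvm : v ≠ m) : v ∉ p.support :=
  fun hp => h.ne_of_mem_support_of_append hvm hp hv rfl

theorem isPath_append_cons {c d : V} {p : G.Walk a b}
    {q : G.Walk c d} (hp : p.IsPath) (hbc : G.Adj b c) (hq : q.IsPath)
    (hpq : p.support.Disjoint q.support) : (p.append (.cons hbc q)).IsPath := by
  rw [Walk.isPath_def, Walk.support_append, Walk.support_cons, List.tail_cons]
  exact List.Nodup.append hp.support_nodup hq.support_nodup hpq

theorem hasObstruction_of_theta_of_chord {X₁ : G.Walk s x} {X₂ : G.Walk x y} {X₃ : G.Walk y t}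
    {Y Z : G.Walk s t} (hX : (X₁.append (X₂.append X₃)).IsPath) (hxy : G.Adj x y)
    (hnd : (s(x, y) :: ((X₁.append (X₂.append X₃)).edges ++ Y.edges ++ Z.edges)).Nodup) :
    HasObstruction G := by
  classical
  have hx₃ : x ∉ X₃.support := by
    rw [Walk.append_assoc] at hX
    exact notMem_support_right_of_isPath_append hX
      ((X₁.mem_support_append_iff X₂).2 (.inl X₁.end_mem_support)) hxy.ne
  have ht₁ : t ∉ X₁.support := notMem_support_left_of_isPath_append hX
    (Walk.end_mem_support _) fun htx => hx₃ (htx ▸ X₃.end_mem_support)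
  refine hasObstruction_of_disjoint_forks (p₁ := X₂) (p₂ := .cons hxy .nil) (p := X₃)
    (q₁ := Y.reverse) (q₂ := Z.reverse) (q := X₁) hx₃ ht₁ (nodup_of_count_le (fun e => ?_) hnd)
  simp only [Walk.edges_append, Walk.edges_reverse, Walk.edges_cons, Walk.edges_nil,
    List.count_append, List.count_cons, List.count_reverse, List.count_nil]
  omega

theorem hasObstruction_of_theta_of_parallel_chords {X₁ : G.Walk s x} {X₂ : G.Walk x x'}
    {X₃ : G.Walk x' t} {Y₁ : G.Walk s y} {Y₂ : G.Walk y y'} {Y₃ : G.Walk y' t}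
    (hxy : G.Adj x y) (hxy' : G.Adj x' y') (hy : y ∉ X₂.support) (hx' : x' ∉ Y₂.support)
    (hnd : (s(x, y) :: s(x', y') :: ((X₁.append (X₂.append X₃)).edges ++
      (Y₁.append (Y₂.append Y₃)).edges)).Nodup) : HasObstruction G := by
  classical
  refine hasObstruction_of_disjoint_forks (p₁ := Y₁.reverse.append X₁) (p₂ := .cons hxy.symm .nil)
    (p := X₂) (q₁ := X₃.append Y₃.reverse) (q₂ := .cons hxy' .nil) (q := Y₂.reverse)
    hy (by simpa using hx') (nodup_of_count_le (fun e => ?_) hnd)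
  simp only [Walk.edges_append, Walk.edges_reverse, Walk.edges_cons, Walk.edges_nil,
    Sym2.eq_swap (a := y), List.count_append, List.count_cons, List.count_reverse, List.count_nil]
  omega

theorem hasObstruction_of_theta_of_spread_chords {X₁ : G.Walk s x} {X₂ : G.Walk x x'}
    {X₃ : G.Walk x' t} {Y₁ : G.Walk s y} {Y₂ : G.Walk y t} {Z₁ : G.Walk s z} {Z₂ : G.Walk z t}
    (hxy : G.Adj x y) (hxz : G.Adj x' z) (hs : s ∉ Y₂.support) (ht : t ∉ Z₁.support)
    (hnd : (s(x, y) :: s(x', z) :: ((X₁.append (X₂.append X₃)).edges ++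
      (Y₁.append Y₂).edges ++ (Z₁.append Z₂).edges)).Nodup) : HasObstruction G := by
  classical
  refine hasObstruction_of_disjoint_forks (p₁ := X₁.append (.cons hxy .nil)) (p₂ := Y₁)
    (p := Y₂) (q₁ := X₃.reverse.append (.cons hxz .nil)) (q₂ := Z₂.reverse) (q := Z₁.reverse)
    hs (by simpa using ht) (nodup_of_count_le (fun e => ?_) hnd)
  simp only [Walk.edges_append, Walk.edges_reverse, Walk.edges_cons, Walk.edges_nil,
    List.count_append, List.count_cons, List.count_reverse, List.count_nil]
  omega

theorem hasObstruction_of_theta_of_crossing_chords {X₁ : G.Walk s x} {X₂ : G.Walk x x'}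
    {X₃ : G.Walk x' t} {Y₁ : G.Walk s y'} {Y₂ : G.Walk y' y} {Y₃ : G.Walk y t} {Z : G.Walk s t}
    (hxy : G.Adj x y) (hxy' : G.Adj x' y') (hs : s ∉ Y₃.support) (hy : y ∉ Y₁.support)
    (hnd : (s(x, y) :: s(x', y') :: ((X₁.append (X₂.append X₃)).edges ++
      (Y₁.append (Y₂.append Y₃)).edges ++ Z.edges)).Nodup) : HasObstruction G := by
  classical
  have hnd' : ((X₁.darts ++ X₂.darts ++ X₃.darts ++ Z.darts ++ Y₁.reverse.darts ++
      Y₂.reverse.darts ++ Y₃.reverse.darts ++ [Dart.mk (y, x) hxy.symm, Dart.mk (x', y') hxy']).map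
        Dart.edge).Nodup := by
    refine nodup_of_count_le (fun e => ?_) hnd
    simp only [List.map_append, ← Walk.edges.eq_1, Walk.edges_append, Walk.edges_reverse,
      List.count_append, List.count_cons, List.count_reverse, List.count_nil, List.map_cons,
      List.map_nil, Sym2.eq_swap (a := y), Dart.edge_mk]
    omega
  have hor := isOriented_of_nodup hnd'
  have hs' := forall_darts_fst_ne (r := Y₃.reverse) (by simpa using hs)
  have hy' := forall_darts_fst_ne (r := Y₁.reverse) (by simpa using hy)
  replace hnd' := hnd'.of_map
  simp only [List.nodup_append, List.mem_append] at hnd'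
  refine hasObstruction_of_forks (a := s) (b := y) (fun h => hs (h ▸ Y₃.start_mem_support))
    ((X₁.append (X₂.append X₃)).append Y₃.reverse) (Z.append Y₃.reverse)
    (Y₂.reverse.append Y₁.reverse)
    (.cons hxy.symm (X₂.append (.cons hxy' Y₁.reverse))) ?_ ?_ (hor.mono fun d => ?_)
  all_goals simp only [Walk.darts_append, Walk.darts_cons, List.mem_append, List.mem_cons]
  · grind
  · grind
  · grind

theorem exists_eq_append_append {X : G.Walk s t} (hx : x ∈ X.support) (hy : y ∈ X.support) :
    (∃ (p : G.Walk s x) (q : G.Walk x y) (r : G.Walk y t), X = p.append (q.append r)) ∨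
      ∃ (p : G.Walk s y) (q : G.Walk y x) (r : G.Walk x t), X = p.append (q.append r) := by
  obtain ⟨p, q, rfl⟩ := Walk.mem_support_iff_exists_append.1 hx
  rcases (p.mem_support_append_iff q).1 hy with hy | hy
  · obtain ⟨p, r, rfl⟩ := Walk.mem_support_iff_exists_append.1 hy
    exact .inr ⟨p, r, q, Walk.append_assoc .. |>.symm⟩
  · obtain ⟨q, r, rfl⟩ := Walk.mem_support_iff_exists_append.1 hy
    exact .inl ⟨p, q, r, rfl⟩

variable {P : Fin 3 → G.Walk s t} {i j k : Fin 3}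

/-- Three pairwise edge-disjoint paths with common ends. They are allowed to meet in further
vertices, as no obstruction below requires them not to. -/
structure IsTheta (P : Fin 3 → G.Walk s t) : Prop where
  isPath : ∀ i, (P i).IsPath
  disjoint_edges : Pairwise fun i j => (P i).edges.Disjoint (P j).edges

theorem IsTheta.vecCons {p₀ p₁ p₂ : G.Walk s t}
    (h₀ : p₀.IsPath) (h₁ : p₁.IsPath) (h₂ : p₂.IsPath) (h₀₁ : p₀.edges.Disjoint p₁.edges)
    (h₀₂ : p₀.edges.Disjoint p₂.edges) (h₁₂ : p₁.edges.Disjoint p₂.edges) :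
    IsTheta ![p₀, p₁, p₂] where
  isPath i := by fin_cases i <;> assumption
  disjoint_edges i j hij := by
    fin_cases i <;> fin_cases j <;>
      first | exact absurd rfl hij | assumption | exact List.Disjoint.symm ‹_›

/-- An edge off the paths of `P` no path of which passes through both of its ends. -/
structure IsTransversalChord (P : Fin 3 → G.Walk s t) (x y : V) : Prop where
  adj : G.Adj x y
  notMem_edges : ∀ i, s(x, y) ∉ (P i).edges
  notMem_support : ∀ i, x ∈ (P i).support → y ∉ (P i).support

namespace IsTransversalChord

theorem symm (h : IsTransversalChord P x y) : IsTransversalChord P y x :=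
  ⟨h.adj.symm, fun i => Sym2.eq_swap ▸ h.notMem_edges i, fun i hy hx => h.notMem_support i hx hy⟩

theorem ne_start (h : IsTransversalChord P x y) (hy : y ∈ (P i).support) : x ≠ s :=
  fun hx => h.notMem_support i (hx ▸ (P i).start_mem_support) hy

theorem ne_end (h : IsTransversalChord P x y) (hy : y ∈ (P i).support) : x ≠ t :=
  fun hx => h.notMem_support i (hx ▸ (P i).end_mem_support) hy

end IsTransversalChord

namespace IsTheta

theorem nodup_edges (h : IsTheta P) (hij : i ≠ j) (hik : i ≠ k) (hjk : j ≠ k) :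
    ((P i).edges ++ (P j).edges ++ (P k).edges).Nodup := by
  have hnd i := (h.isPath i).isTrail.edges_nodup
  refine ((hnd i).append (hnd j) (h.disjoint_edges hij)).append (hnd k) ?_
  exact List.disjoint_append_left.2 ⟨h.disjoint_edges hik, h.disjoint_edges hjk⟩

theorem hasObstruction_of_chord (h : IsTheta P) (hxy : G.Adj x y)
    (hP : ∀ i, s(x, y) ∉ (P i).edges) (hx : x ∈ (P i).support) (hy : y ∈ (P i).support) :
    HasObstruction G := by
  obtain ⟨j, k, hij, hik, hjk⟩ : ∃ j k, i ≠ j ∧ i ≠ k ∧ j ≠ k :=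
    (by decide : ∀ i : Fin 3, ∃ j k, i ≠ j ∧ i ≠ k ∧ j ≠ k) i
  have hnd := h.nodup_edges hij hik hjk
  have hpath := h.isPath i
  have hmem : s(x, y) ∉ (P i).edges ++ (P j).edges ++ (P k).edges := by simp [hP]
  rcases exists_eq_append_append hx hy with ⟨p, q, r, hi⟩ | ⟨p, q, r, hi⟩ <;>
    rw [hi] at hnd hpath hmem
  · exact hasObstruction_of_theta_of_chord hpath hxy (List.nodup_cons.2 ⟨hmem, hnd⟩)
  · exact hasObstruction_of_theta_of_chord hpath hxy.symm
      (List.nodup_cons.2 ⟨Sym2.eq_swap ▸ hmem, hnd⟩)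

theorem nodup_cons_cons_edges (h : IsTheta P) (hij : i ≠ j) (hik : i ≠ k) (hjk : j ≠ k)
    (hxy : IsTransversalChord P x y) (hxy' : IsTransversalChord P x' y')
    (hne : s(x, y) ≠ s(x', y')) :
    (s(x, y) :: s(x', y') :: ((P i).edges ++ (P j).edges ++ (P k).edges)).Nodup := by
  refine List.nodup_cons.2 ⟨?_, List.nodup_cons.2 ⟨?_, h.nodup_edges hij hik hjk⟩⟩
  · simp [hne, hxy.notMem_edges]
  · simp [hxy'.notMem_edges]

theorem hasObstruction_of_chords_of_same_ends (h : IsTheta P) (hij : i ≠ j)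
    (hxy : IsTransversalChord P x y) (hxy' : IsTransversalChord P x' y')
    (hne : s(x, y) ≠ s(x', y')) (hx : x ∈ (P i).support) (hx' : x' ∈ (P i).support)
    (hy : y ∈ (P j).support) (hy' : y' ∈ (P j).support) : HasObstruction G := by
  classical
  wlog hle : ∃ (p : G.Walk s x) (q : G.Walk x x') (r : G.Walk x' t), P i = p.append (q.append r)
    generalizing x x' y y'
  · exact this hxy' hxy hne.symm hx' hx hy' hy ((exists_eq_append_append hx hx').resolve_left hle)
  obtain ⟨p, q, r, hi⟩ := hle
  obtain ⟨k, hik, hjk⟩ := (by decide : ∀ i j : Fin 3, ∃ k, i ≠ k ∧ j ≠ k) i j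
  have hnd := h.nodup_cons_cons_edges hij hik hjk hxy hxy' hne
  rw [hi] at hnd
  have hyq : y ∉ q.support := fun hyq => hxy.symm.notMem_support i (by simp [hi, hyq]) hx
  have parallel {p' : G.Walk s y} {q' : G.Walk y y'} {r' : G.Walk y' t}
      (hj : P j = p'.append (q'.append r')) : HasObstruction G := by
    have hxq : x' ∉ q'.support := fun hxq => hxy'.notMem_support j (by simp [hj, hxq]) hy'
    refine hasObstruction_of_theta_of_parallel_chords (X₁ := p) (X₃ := r) (Y₁ := p') (Y₃ := r')
      hxy.adj hxy'.adj hyq hxq (nodup_of_count_le (fun e => ?_) hnd)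
    simp only [hj, List.count_cons, List.count_append]
    omega
  rcases exists_eq_append_append hy hy' with ⟨p', q', r', hj⟩ | ⟨p', q', r', hj⟩
  · exact parallel hj
  obtain rfl | hyy := eq_or_ne y y'
  · exact parallel hj
  have hpath := hj ▸ h.isPath j
  rw [hj] at hnd
  refine hasObstruction_of_theta_of_crossing_chords hxy.adj hxy'.adj ?_ ?_ hnd
  · rw [Walk.append_assoc] at hpath
    exact notMem_support_right_of_isPath_append hpath (Walk.start_mem_support _)
      (hxy.symm.ne_start hx).symm
  · exact notMem_support_left_of_isPath_append hpath (by simp) hyy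

theorem hasObstruction_of_chords_of_common_end (h : IsTheta P) (hij : i ≠ j) (hik : i ≠ k)
    (hxy : IsTransversalChord P x y) (hxy' : IsTransversalChord P x' y')
    (hne : s(x, y) ≠ s(x', y')) (hx : x ∈ (P i).support) (hx' : x' ∈ (P i).support)
    (hy : y ∈ (P j).support) (hy' : y' ∈ (P k).support) : HasObstruction G := by
  obtain rfl | hjk := eq_or_ne j k
  · exact h.hasObstruction_of_chords_of_same_ends hij hxy hxy' hne hx hx' hy hy'
  wlog hle : ∃ (p : G.Walk s x) (q : G.Walk x x') (r : G.Walk x' t), P i = p.append (q.append r)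
    generalizing x x' y y' j k
  · exact this hik hij hxy' hxy hne.symm hx' hx hy' hy hjk.symm
      ((exists_eq_append_append hx hx').resolve_left hle)
  obtain ⟨p, q, r, hi⟩ := hle
  obtain ⟨p', q', hj⟩ := Walk.mem_support_iff_exists_append.1 hy
  obtain ⟨p'', q'', hk⟩ := Walk.mem_support_iff_exists_append.1 hy'
  have hnd := h.nodup_cons_cons_edges hij hik hjk hxy hxy' hne
  rw [hi, hj, hk] at hnd
  exact hasObstruction_of_theta_of_spread_chords hxy.adj hxy'.adj
    (notMem_support_right_of_isPath_append (hj ▸ h.isPath j) p'.start_mem_support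
      (hxy.symm.ne_start hx).symm)
    (notMem_support_left_of_isPath_append (hk ▸ h.isPath k) q''.end_mem_support
      (hxy'.symm.ne_end hx').symm) hnd

theorem hasObstruction_of_transversalChords (h : IsTheta P)
    (hxy : IsTransversalChord P x y) (hxy' : IsTransversalChord P x' y')
    (hne : s(x, y) ≠ s(x', y')) (hcover : ∀ v, ∃ i, v ∈ (P i).support) : HasObstruction G := by
  obtain ⟨i, hi⟩ := hcover x
  obtain ⟨j, hj⟩ := hcover y
  obtain ⟨i', hi'⟩ := hcover x'
  obtain ⟨j', hj'⟩ := hcover y'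
  have hij : i ≠ j := fun h => hxy.notMem_support i hi (h ▸ hj)
  have hij' : i' ≠ j' := fun h => hxy'.notMem_support i' hi' (h ▸ hj')
  have hne' : s(x, y) ≠ s(y', x') := Sym2.eq_swap (a := y') ▸ hne
  have hor := (by decide : ∀ i j i' j' : Fin 3, i ≠ j → i' ≠ j' →
    i = i' ∨ i = j' ∨ j = i' ∨ j = j') i j i' j' hij hij'
  rcases hor with rfl | rfl | rfl | rfl
  · exact h.hasObstruction_of_chords_of_common_end hij hij' hxy hxy' hne hi hi' hj hj'
  · exact h.hasObstruction_of_chords_of_common_end hij hij'.symm hxy hxy'.symm hne' hi hj' hj hi'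
  · exact h.hasObstruction_of_chords_of_common_end hij.symm hij' hxy.symm hxy'
      (Sym2.eq_swap (a := y) ▸ hne) hj hi' hi hj'
  · exact h.hasObstruction_of_chords_of_common_end hij.symm hij'.symm hxy.symm hxy'.symm
      (Sym2.eq_swap (a := y) ▸ hne') hj hj' hi hi'

theorem hasObstruction_of_two_chords (h : IsTheta P) (hcover : ∀ v, ∃ i, v ∈ (P i).support)
    (hxy : G.Adj x y) (hxy' : G.Adj x' y') (hP : ∀ i, s(x, y) ∉ (P i).edges)
    (hP' : ∀ i, s(x', y') ∉ (P i).edges) (hne : s(x, y) ≠ s(x', y')) : HasObstruction G := by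
  by_cases hxyP : ∃ i, x ∈ (P i).support ∧ y ∈ (P i).support
  · obtain ⟨i, hx, hy⟩ := hxyP
    exact h.hasObstruction_of_chord hxy hP hx hy
  by_cases hxyP' : ∃ i, x' ∈ (P i).support ∧ y' ∈ (P i).support
  · obtain ⟨i, hx, hy⟩ := hxyP'
    exact h.hasObstruction_of_chord hxy' hP' hx hy
  push Not at hxyP hxyP'
  exact h.hasObstruction_of_transversalChords ⟨hxy, hP, hxyP⟩ ⟨hxy', hP', hxyP'⟩ hne hcover

theorem hasObstruction_of_card_le [Finite V] (h : IsTheta P)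
    (hcover : ∀ v, ∃ i, v ∈ (P i).support)
    (hcard : ∑ i, (P i).length + 2 ≤ G.edgeSet.ncard) : HasObstruction G := by
  classical
  let es : Finset (Sym2 V) := Finset.univ.biUnion fun i => (P i).edges.toFinset
  have hes : es.card ≤ ∑ i, (P i).length := Finset.card_biUnion_le.trans
    (Finset.sum_le_sum fun i _ => (P i).length_edges ▸ List.toFinset_card_le _)
  have hlt : 1 < (G.edgeSet \ es).ncard := by
    have := Set.ncard_le_ncard_sdiff_add_ncard G.edgeSet es
    rw [Set.ncard_coe_finset] at this
    omega
  obtain ⟨e, e', ⟨he, hes⟩, ⟨he', hes'⟩, hne⟩ := (Set.one_lt_ncard_iff).1 hlt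
  induction e with | _ x y
  induction e' with | _ x' y'
  simp only [es, Finset.coe_biUnion, Set.mem_iUnion, not_exists, Finset.mem_coe,
    List.mem_toFinset, Finset.mem_univ, true_imp_iff] at hes hes'
  exact h.hasObstruction_of_two_chords hcover he he' hes hes' hne

end IsTheta

end Theta

section HamiltonPath

variable {n : ℕ} {G : SimpleGraph (Fin n)} {i j k l : Fin n}

/-- The walk `i, i + 1, …, j` in a graph in which consecutive numbers are adjacent. -/
def ascend (hG : pathGraph n ≤ G) (i j : Fin n) (hij : i ≤ j) : G.Walk i j :=
  if h : i = j then Walk.nil.copy rfl h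
  else
    have hlt : i < j := lt_of_le_of_ne hij h
    .cons (v := ⟨i + 1, by omega⟩) (hG (pathGraph_adj.2 (.inl rfl)))
      (ascend hG ⟨i + 1, by omega⟩ j hlt)
termination_by (j : ℕ) - i

theorem ascend_self (hG : pathGraph n ≤ G) (i : Fin n) : ascend hG i i le_rfl = .nil := by
  rw [ascend]
  simp

theorem ascend_of_lt (hG : pathGraph n ≤ G) (hij : i < j) : ascend hG i j hij.le =
    .cons (v := ⟨i + 1, by omega⟩) (hG (pathGraph_adj.2 (.inl rfl)))
      (ascend hG ⟨i + 1, by omega⟩ j hij) := by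
  rw [ascend]
  simp [hij.ne]

theorem mem_darts_ascend (hG : pathGraph n ≤ G) (hij : i ≤ j) {d : G.Dart} :
    d ∈ (ascend hG i j hij).darts ↔
      (i : ℕ) ≤ d.fst ∧ (d.snd : ℕ) ≤ j ∧ (d.fst : ℕ) + 1 = d.snd := by
  induction i, hij using ascend.induct (j := j) with
  | case1 =>
    simp only [ascend_self, Walk.darts_nil, List.not_mem_nil, false_iff]
    omega
  | case2 i _ _ hlt ih =>
    rw [ascend_of_lt hG hlt, Walk.darts_cons, List.mem_cons, ih]
    simp only [Dart.ext_iff, Prod.ext_iff, Fin.ext_iff]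
    omega

theorem mem_support_ascend (hG : pathGraph n ≤ G) (hij : i ≤ j) :
    k ∈ (ascend hG i j hij).support ↔ i ≤ k ∧ k ≤ j := by
  induction i, hij using ascend.induct (j := j) with
  | case1 =>
    rw [ascend_self, Walk.mem_support_nil_iff]
    omega
  | case2 i _ _ hlt ih =>
    rw [ascend_of_lt hG hlt, Walk.support_cons, List.mem_cons, ih]
    simp only [Fin.le_def, Fin.ext_iff]
    omega

theorem length_ascend (hG : pathGraph n ≤ G) (hij : i ≤ j) :
    (ascend hG i j hij).length = j - i := by
  induction i, hij using ascend.induct (j := j) with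
  | case1 => simp [ascend_self]
  | case2 i _ _ hlt ih =>
    rw [ascend_of_lt hG hlt, Walk.length_cons, ih, Nat.sub_add_eq]
    omega

theorem isPath_ascend (hG : pathGraph n ≤ G) (hij : i ≤ j) : (ascend hG i j hij).IsPath := by
  induction i, hij using ascend.induct (j := j) with
  | case1 => simp [ascend_self]
  | case2 i _ _ hlt ih =>
    rw [ascend_of_lt hG hlt, Walk.cons_isPath_iff, mem_support_ascend]
    exact ⟨ih, fun h => absurd h.1 (by simp [Fin.le_def])⟩

theorem hasObstruction_of_linked_chords (hG : pathGraph n ≤ G) {l₁ r₁ l₂ r₂ l₃ r₃ : Fin n}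
    (h₁ : G.Adj l₁ r₁) (h₂ : G.Adj l₂ r₂) (h₃ : G.Adj l₃ r₃) (hl : l₁ ≤ l₂) (hl₂ : l₂ < r₁)
    (hr₁ : r₁ ≤ l₃) (hl₃ : l₃ < r₂) (hr : r₂ ≤ r₃) (hlr₁ : (l₁ : ℕ) + 2 ≤ r₁)
    (hlr₃ : (l₃ : ℕ) + 2 ≤ r₃) : HasObstruction G := by
  refine hasObstruction_of_forks (a := l₂) (b := l₃) (by omega) (ascend hG l₂ l₃ (by omega))
    ((ascend hG l₁ l₂ hl).reverse.append (.cons h₁ (ascend hG r₁ l₃ hr₁)))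
    ((ascend hG l₃ r₂ hl₃.le).append (.cons h₂.symm .nil))
    (.cons h₃ ((ascend hG r₂ r₃ hr).reverse.append (.cons h₂.symm .nil))) ?_ ?_ ?_
  all_goals
    simp only [IsOriented, Walk.darts_append, Walk.darts_cons, Walk.darts_nil, List.mem_append,
      List.mem_cons, List.not_mem_nil, or_false, Walk.mem_darts_reverse, mem_darts_ascend,
      Dart.ext_iff, Prod.ext_iff, Dart.symm, Prod.fst_swap, Prod.snd_swap]
    omega

theorem hasObstruction_of_chord_left_of_touching_chords (hG : pathGraph n ≤ G) {l v r x y : Fin n}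
    (hlv : G.Adj l v) (hvr : G.Adj v r) (hxy : G.Adj x y) (hl : l ≤ x) (hxy' : (x : ℕ) + 2 ≤ y)
    (hy : y < v) (hr : (v : ℕ) + 2 ≤ r) : HasObstruction G := by
  refine hasObstruction_of_theta_loop (s := x) (t := y) (v := v) (x := ascend hG x y (by omega))
    (y := .cons hxy .nil) (p := ascend hG y v hy.le) (q := .cons hlv.symm (ascend hG l x hl))
    (r := (ascend hG v r (by omega)).append (.cons hvr.symm .nil))
    (by omega) (by omega) (by simp) ?_ ?_ ?_ ?_ ?_ ?_
  all_goals
    simp only [IsOriented, List.Disjoint, Walk.darts_append, Walk.darts_cons, Walk.darts_nil,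
      List.mem_append, List.mem_cons, List.not_mem_nil, or_false, mem_darts_ascend,
      Dart.ext_iff, Prod.ext_iff, Dart.symm, Prod.fst_swap, Prod.snd_swap]
    omega

theorem hasObstruction_of_chord_right_of_touching_chords (hG : pathGraph n ≤ G)
    {l v r x y : Fin n} (hlv : G.Adj l v) (hvr : G.Adj v r) (hxy : G.Adj x y)
    (hx : v < x) (hxy' : (x : ℕ) + 2 ≤ y) (hy : y ≤ r) (hl : (l : ℕ) + 2 ≤ v) :
    HasObstruction G := by
  refine hasObstruction_of_theta_loop (s := x) (t := y) (v := v) (x := ascend hG x y (by omega))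
    (y := .cons hxy .nil) (p := (ascend hG y r hy).append (.cons hvr.symm .nil))
    (q := ascend hG v x hx.le) (r := .cons hlv.symm (ascend hG l v (by omega)))
    (by omega) (by omega) (by simp) ?_ ?_ ?_ ?_ ?_ ?_
  all_goals
    simp only [IsOriented, List.Disjoint, Walk.darts_append, Walk.darts_cons, Walk.darts_nil,
      List.mem_append, List.mem_cons, List.not_mem_nil, or_false, mem_darts_ascend,
      Dart.ext_iff, Prod.ext_iff, Dart.symm, Prod.fst_swap, Prod.snd_swap]
    omega

theorem hasObstruction_of_loop_left_of_linked_chords (hG : pathGraph n ≤ G)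
    {l v r x y : Fin n} (hlv : G.Adj l v) (hvy : G.Adj v y) (hxr : G.Adj x r)
    (hl : (l : ℕ) + 2 ≤ v) (hx : v < x) (hxy : x < y) (hy : y < r) : HasObstruction G := by
  refine hasObstruction_of_theta_loop (s := x) (t := y) (v := v) (x := ascend hG x y hxy.le)
    (y := .cons hxr (ascend hG y r hy.le).reverse) (p := .cons hvy.symm .nil)
    (q := ascend hG v x hx.le) (r := .cons hlv.symm (ascend hG l v (by omega)))
    (by omega) (by omega) (by simp) ?_ ?_ ?_ ?_ ?_ ?_
  all_goals
    simp only [IsOriented, List.Disjoint, Walk.darts_cons, Walk.darts_nil,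
      List.mem_append, List.mem_cons, List.not_mem_nil, or_false, Walk.mem_darts_reverse,
      mem_darts_ascend, Dart.ext_iff, Prod.ext_iff, Dart.symm, Prod.fst_swap, Prod.snd_swap]
    omega

theorem hasObstruction_of_loop_right_of_linked_chords (hG : pathGraph n ≤ G)
    {l v r x y : Fin n} (hly : G.Adj l y) (hxv : G.Adj x v) (hvr : G.Adj v r)
    (hx : l < x) (hxy : x < y) (hy : y < v) (hr : (v : ℕ) + 2 ≤ r) : HasObstruction G := by
  refine hasObstruction_of_theta_loop (s := x) (t := y) (v := v) (x := ascend hG x y hxy.le)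
    (y := (ascend hG l x hx.le).reverse.append (.cons hly .nil)) (p := ascend hG y v hy.le)
    (q := .cons hxv.symm .nil) (r := (ascend hG v r (by omega)).append (.cons hvr.symm .nil))
    (by omega) (by omega) (by simp) ?_ ?_ ?_ ?_ ?_ ?_
  all_goals
    simp only [IsOriented, List.Disjoint, Walk.darts_append, Walk.darts_cons, Walk.darts_nil,
      List.mem_append, List.mem_cons, List.not_mem_nil, or_false, Walk.mem_darts_reverse,
      mem_darts_ascend, Dart.ext_iff, Prod.ext_iff, Dart.symm, Prod.fst_swap, Prod.snd_swap]
    omega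

theorem hasObstruction_of_chord_left_at_touching_chords (hG : pathGraph n ≤ G)
    {l v r x : Fin n} (hlv : G.Adj l v) (hxv : G.Adj x v) (hvr : G.Adj v r)
    (hl : l < x) (hx : (x : ℕ) + 2 ≤ v) (hr : (v : ℕ) + 2 ≤ r) : HasObstruction G := by
  refine hasObstruction_of_theta_loop_at_end hxv (x := (ascend hG x v (by omega)).reverse)
    (y := .cons hlv.symm (ascend hG l x hl.le))
    (r := (ascend hG v r (by omega)).append (.cons hvr.symm .nil))
    (by simp) ?_ ?_ ?_ ?_ ?_
  all_goals
    simp only [IsOriented, List.Disjoint, Walk.darts_append, Walk.darts_cons, Walk.darts_nil,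
      List.mem_append, List.mem_cons, List.not_mem_nil, or_false, Walk.mem_darts_reverse,
      mem_darts_ascend, Dart.ext_iff, Prod.ext_iff, Dart.symm, Prod.fst_swap, Prod.snd_swap]
    omega

theorem hasObstruction_of_chord_right_at_touching_chords (hG : pathGraph n ≤ G)
    {l v r y : Fin n} (hlv : G.Adj l v) (hvy : G.Adj v y) (hvr : G.Adj v r)
    (hl : (l : ℕ) + 2 ≤ v) (hy : (v : ℕ) + 2 ≤ y) (hr : y < r) : HasObstruction G := by
  refine hasObstruction_of_theta_loop_at_end hvy.symm (x := ascend hG v y (by omega))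
    (y := .cons hvr (ascend hG y r hr.le).reverse)
    (r := .cons hlv.symm (ascend hG l v (by omega)))
    (by simp) ?_ ?_ ?_ ?_ ?_
  all_goals
    simp only [IsOriented, List.Disjoint, Walk.darts_cons,
      List.mem_append, List.mem_cons, Walk.mem_darts_reverse,
      mem_darts_ascend, Dart.ext_iff, Prod.ext_iff, Dart.symm, Prod.fst_swap, Prod.snd_swap]
    omega

theorem hasObstruction_of_four_touching_chords (hG : pathGraph n ≤ G) {l a b c r : Fin n}
    (hla : G.Adj l a) (hab : G.Adj a b) (hbc : G.Adj b c) (hcr : G.Adj c r)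
    (hl : (l : ℕ) + 2 ≤ a) (ha : (a : ℕ) + 2 ≤ b) (hb : (b : ℕ) + 2 ≤ c) (hc : (c : ℕ) + 2 ≤ r) :
    HasObstruction G := by
  obtain ⟨s, hs⟩ : ∃ s : Fin n, (s : ℕ) = a + 1 := ⟨⟨a + 1, by omega⟩, rfl⟩
  obtain ⟨t, ht⟩ : ∃ t : Fin n, (t : ℕ) = b + 1 := ⟨⟨b + 1, by omega⟩, rfl⟩
  refine hasObstruction_of_closedWalk_chain (s := s) (t := t) hab hbc.symm
    (p := (ascend hG a b (by omega)).reverse) (q := ascend hG b c (by omega))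
    (ra := .cons hla.symm (ascend hG l a (by omega)))
    (rc := (ascend hG c r (by omega)).append (.cons hcr.symm .nil))
    (by rw [Walk.support_reverse, List.mem_reverse, mem_support_ascend]; omega) (by omega)
    (by omega) (by rw [mem_support_ascend]; omega) (by omega) (by omega) (by simp) (by simp)
    ?_ ?_ ?_ ?_
  all_goals
    simp only [IsOriented, List.Disjoint, Walk.darts_append, Walk.darts_cons, Walk.darts_nil,
      List.mem_append, List.mem_cons, List.not_mem_nil, or_false, Walk.mem_darts_reverse,
      mem_darts_ascend, Dart.ext_iff, Prod.ext_iff, Dart.symm, Prod.fst_swap, Prod.snd_swap]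
    omega

theorem hasObstruction_of_touching_chords (hG : pathGraph n ≤ G) {l v r x y : Fin n}
    (hlv : G.Adj l v) (hvr : G.Adj v r) (hxy : G.Adj x y) (hlv₂ : (l : ℕ) + 2 ≤ v)
    (hvr₂ : (v : ℕ) + 2 ≤ r) (hxy₂ : (x : ℕ) + 2 ≤ y) (hlx : l ≤ x) (hyr : y ≤ r)
    (hne : (x, y) ≠ (l, v)) (hne' : (x, y) ≠ (v, r)) : HasObstruction G := by
  rcases lt_trichotomy y v with hyv | rfl | hvy
  · exact hasObstruction_of_chord_left_of_touching_chords hG hlv hvr hxy hlx hxy₂ hyv hvr₂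
  · refine hasObstruction_of_chord_left_at_touching_chords hG hlv hxy hvr
      (lt_of_le_of_ne hlx fun h => hne (by rw [h])) hxy₂ hvr₂
  rcases lt_trichotomy x v with hxv | rfl | hvx
  · exact hasObstruction_of_linked_chords hG hlv hxy hvr hlx hxv le_rfl hvy hyr hlv₂ hvr₂
  · refine hasObstruction_of_chord_right_at_touching_chords hG hlv hxy hvr hlv₂ hxy₂
      (lt_of_le_of_ne hyr fun h => hne' (by rw [h]))
  · exact hasObstruction_of_chord_right_of_touching_chords hG hlv hvr hxy hvx hxy₂ hyr hlv₂

theorem mem_edges_ascend (hG : pathGraph n ≤ G) (hij : i ≤ j) :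
    s(k, l) ∈ (ascend hG i j hij).edges ↔
      i ≤ k ∧ k ≤ j ∧ i ≤ l ∧ l ≤ j ∧ ((k : ℕ) + 1 = l ∨ (l : ℕ) + 1 = k) := by
  simp only [Walk.edges, List.mem_map, mem_darts_ascend, dart_edge_eq_mk'_iff']
  constructor
  · rintro ⟨d, hd, h | h⟩ <;> omega
  · rintro ⟨hik, hkj, hil, hlj, h | h⟩
    · exact ⟨⟨(k, l), hG (pathGraph_adj.2 (.inl h))⟩, ⟨hik, hlj, h⟩, .inl ⟨rfl, rfl⟩⟩
    · exact ⟨⟨(l, k), hG (pathGraph_adj.2 (.inl h))⟩, ⟨hil, hkj, h⟩, .inr ⟨rfl, rfl⟩⟩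

theorem hasObstruction_of_hamiltonian_cycle_chord (hG : pathGraph n ≤ G) {a z : Fin n}
    (ha : (a : ℕ) = 0) (hz : (z : ℕ) + 1 = n) (haz : G.Adj a z) (hij : G.Adj i j)
    (hij₂ : (i : ℕ) + 2 ≤ j) (hne : (i, j) ≠ (a, z)) (hcard : n + 3 ≤ G.edgeSet.ncard) :
    HasObstruction G := by
  have hij' : i ≤ j := by omega
  have hne' : ¬ (i = a ∧ j = z) := by simpa using hne
  let p := (ascend hG a i (by omega)).reverse.append
    (.cons haz (ascend hG j z (by omega)).reverse)
  have hp : p.IsPath := by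
    refine isPath_append_cons (isPath_ascend ..).reverse haz (isPath_ascend ..).reverse ?_
    simp only [List.Disjoint, Walk.support_reverse, List.mem_reverse, mem_support_ascend]
    omega
  have htheta : IsTheta ![ascend hG i j hij', p, hij.toWalk] := by
    refine .vecCons (isPath_ascend ..) hp (.of_adj hij) ?_ ?_ ?_
    all_goals
      rintro ⟨k, l⟩
      simp only [p, Walk.edges_append, Walk.edges_cons, Walk.edges_reverse, Walk.edges_nil,
        Sym2.eq_iff, List.mem_append, List.mem_reverse, List.mem_cons, List.not_mem_nil, or_false,
        mem_edges_ascend, Adj.toWalk]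
      omega
  refine htheta.hasObstruction_of_card_le (fun v => ?_) ?_
  · by_cases hv : i ≤ v ∧ v ≤ j
    · exact ⟨0, (mem_support_ascend hG hij').2 hv⟩
    · refine ⟨1, ?_⟩
      simp only [Matrix.cons_val_one, Matrix.cons_val_zero, p, Walk.mem_support_append_iff,
        Walk.support_cons, List.mem_cons, Walk.support_reverse, List.mem_reverse,
        mem_support_ascend]
      omega
  · simp only [Fin.sum_univ_three, Matrix.cons_val, p, Adj.toWalk, Walk.length_append,
      Walk.length_cons, Walk.length_nil, Walk.length_reverse, length_ascend]
    omega

theorem hasObstruction_of_overlapping_chords (hG : pathGraph n ≤ G) {a z : Fin n}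
    (ha : (a : ℕ) = 0) (hz : (z : ℕ) + 1 = n) (haj : G.Adj a j) (hiz : G.Adj i z)
    (hi : a < i) (hij : i < j) (hj : j < z) (hcard : n + 3 ≤ G.edgeSet.ncard) :
    HasObstruction G := by
  let p := (ascend hG a i hi.le).reverse.append haj.toWalk
  let q := Walk.cons hiz (ascend hG j z hj.le).reverse
  have hp : p.IsPath := isPath_append_cons (isPath_ascend ..).reverse haj .nil (by
    simp only [List.Disjoint, Walk.support_reverse, List.mem_reverse, mem_support_ascend,
      Walk.support_nil, List.mem_singleton]
    omega)
  have hq : q.IsPath := (isPath_ascend ..).reverse.cons (by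
    rw [Walk.support_reverse, List.mem_reverse, mem_support_ascend]
    omega)
  have htheta : IsTheta ![ascend hG i j hij.le, p, q] := by
    refine .vecCons (isPath_ascend ..) hp hq ?_ ?_ ?_
    all_goals
      rintro ⟨k, l⟩
      simp only [p, q, Walk.edges_append, Walk.edges_cons, Walk.edges_reverse, Walk.edges_nil,
        Sym2.eq_iff, List.mem_append, List.mem_reverse, List.mem_cons, List.not_mem_nil, or_false,
        mem_edges_ascend, Adj.toWalk]
      omega
  refine htheta.hasObstruction_of_card_le (fun v => ?_) ?_
  · simp only [Fin.exists_fin_succ, IsEmpty.exists_iff, Matrix.cons_val_zero,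
      Matrix.cons_val_succ, p, q, Adj.toWalk, Walk.mem_support_append_iff, Walk.support_cons,
      Walk.support_nil, List.mem_cons, List.not_mem_nil, Walk.support_reverse, List.mem_reverse,
      mem_support_ascend]
    omega
  · simp only [Fin.sum_univ_three, Matrix.cons_val, p, q, Adj.toWalk, Walk.length_append,
      Walk.length_cons, Walk.length_nil, Walk.length_reverse, length_ascend]
    omega

theorem exists_chord_notMem (hG : pathGraph n ≤ G) (hn : 0 < n) (L : List (Fin n × Fin n))
    (hcard : n + L.length ≤ G.edgeSet.ncard) :
    ∃ i j, G.Adj i j ∧ (i : ℕ) + 2 ≤ j ∧ (i, j) ∉ L := by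
  by_contra! hL
  let p := ascend hG ⟨0, hn⟩ ⟨n - 1, by omega⟩ (Fin.mk_le_mk.2 (Nat.zero_le _))
  let es := (p.edges ++ L.map fun d => s(d.1, d.2)).toFinset
  have hsub : G.edgeSet ⊆ es := by
    have hlt (i j : Fin n) (hij : i < j) (hadj : G.Adj i j) : s(i, j) ∈ es := by
      rw [List.mem_toFinset, List.mem_append, mem_edges_ascend, List.mem_map]
      by_cases h : (i : ℕ) + 2 ≤ j
      · exact .inr ⟨(i, j), hL i j hadj h, rfl⟩
      · exact .inl (by simp only [Fin.le_def]; omega)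
    intro e hadj
    induction e with | _ i j
    rcases lt_or_gt_of_ne (G.ne_of_adj hadj) with hij | hji
    · exact hlt i j hij hadj
    · rw [Sym2.eq_swap]
      exact hlt j i hji (G.adj_symm hadj)
  have hes : es.card ≤ (n - 1) + L.length := (List.toFinset_card_le _).trans
    (by simp [p, length_ascend])
  have := Set.ncard_le_ncard hsub es.finite_toSet
  rw [Set.ncard_coe_finset] at this
  omega

/-- `{i, j}` is a chord of the Hamiltonian path `0, 1, …` which starts at or before `k`, ends
after `k`, and among the chords starting at or before `k` reaches furthest to the right. -/
structure IsFurthestChord (G : SimpleGraph (Fin n)) (k i j : Fin n) : Prop where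
  adj : G.Adj i j
  two_le : (i : ℕ) + 2 ≤ j
  le : i ≤ k
  lt : k < j
  maximal : ∀ x y, G.Adj x y → (x : ℕ) + 2 ≤ y → x ≤ k → y ≤ j

theorem exists_isFurthestChord
    (hk : ∃ i j, G.Adj i j ∧ (i : ℕ) + 2 ≤ j ∧ i ≤ k ∧ k < j) :
    ∃ i j, IsFurthestChord G k i j := by
  obtain ⟨i, j, hadj, hij, hik, hkj⟩ := hk
  obtain ⟨⟨x, y⟩, ⟨hxy, hxy₂, hxk⟩, hmax⟩ := Set.exists_max_image
    {e : Fin n × Fin n | G.Adj e.1 e.2 ∧ (e.1 : ℕ) + 2 ≤ e.2 ∧ e.1 ≤ k} Prod.snd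
    (Set.toFinite _) ⟨(i, j), hadj, hij, hik⟩
  exact ⟨x, y, hxy, hxy₂, hxk, hkj.trans_le (hmax (i, j) ⟨hadj, hij, hik⟩),
    fun x' y' h h₂ hk => hmax (x', y') ⟨h, h₂, hk⟩⟩

theorem IsFurthestChord.lt_of_isFurthestChord {i' j' : Fin n} (h : IsFurthestChord G k i j)
    (h' : IsFurthestChord G j i' j') : k < i' := by
  by_contra! hle
  exact (h.maximal i' j' h'.adj h'.two_le hle).not_gt h'.lt

theorem hasObstruction_of_overlapping_furthest_chords (hG : pathGraph n ≤ G)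
    (hcard : n + 3 ≤ G.edgeSet.ncard)
    (hcover : ∀ k : Fin n, (k : ℕ) + 1 < n → ∃ i j, IsFurthestChord G k i j) {a : Fin n}
    (ha : (a : ℕ) = 0) (haj : IsFurthestChord G a a j) (hkl : IsFurthestChord G j k l)
    (hkj : k < j) : HasObstruction G := by
  have hak := haj.lt_of_isFurthestChord hkl
  by_cases hl : (l : ℕ) + 1 = n
  · exact hasObstruction_of_overlapping_chords hG ha hl haj.adj hkl.adj hak hkj hkl.lt hcard
  obtain ⟨u, v, huv⟩ := hcover l (by omega)
  have hju := hkl.lt_of_isFurthestChord huv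
  rcases huv.le.lt_or_eq with hul | rfl
  · exact hasObstruction_of_linked_chords hG haj.adj hkl.adj huv.adj hak.le hkj hju.le hul
      huv.lt.le haj.two_le huv.two_le
  · exact hasObstruction_of_loop_right_of_linked_chords hG haj.adj hkl.adj huv.adj hak hkj hju
      huv.two_le

theorem hasObstruction_of_touching_furthest_chords (hG : pathGraph n ≤ G)
    (hcard : n + 3 ≤ G.edgeSet.ncard)
    (hcover : ∀ k : Fin n, (k : ℕ) + 1 < n → ∃ i j, IsFurthestChord G k i j) {a : Fin n}
    (ha : (a : ℕ) = 0) (haj : IsFurthestChord G a a j) (hjk : IsFurthestChord G j j k) :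
    HasObstruction G := by
  by_cases hk : (k : ℕ) + 1 = n
  · obtain ⟨x, y, hxy, hxy₂, hne⟩ := exists_chord_notMem hG (by omega) [(a, j), (j, k)]
      (by simp only [List.length_cons, List.length_nil]; omega)
    simp only [List.mem_cons, List.not_mem_nil, or_false, not_or] at hne
    exact hasObstruction_of_touching_chords hG haj.adj hjk.adj hxy haj.two_le hjk.two_le hxy₂
      (by omega) (by omega) hne.1 hne.2
  obtain ⟨u, l, hul⟩ := hcover k (by omega)
  have hju := hjk.lt_of_isFurthestChord hul
  rcases hul.le.lt_or_eq with huk | rfl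
  · exact hasObstruction_of_loop_left_of_linked_chords hG haj.adj hjk.adj hul.adj haj.two_le hju
      huk hul.lt
  by_cases hl : (l : ℕ) + 1 = n
  · obtain ⟨x, y, hxy, hxy₂, hne⟩ := exists_chord_notMem hG (by omega) [(a, j), (j, u), (u, l)]
      (by simpa using hcard)
    simp only [List.mem_cons, List.not_mem_nil, or_false, not_or] at hne
    obtain ⟨hne₁, hne₂, hne₃⟩ := hne
    rcases le_or_gt y u with hyu | huy
    · exact hasObstruction_of_touching_chords hG haj.adj hjk.adj hxy haj.two_le hjk.two_le hxy₂
        (by omega) hyu hne₁ hne₂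
    · have hjx : j < x := by
        by_contra! hxj
        exact (hjk.maximal x y hxy hxy₂ hxj).not_gt huy
      exact hasObstruction_of_touching_chords hG hjk.adj hul.adj hxy hjk.two_le hul.two_le hxy₂
        hjx.le (by omega) hne₂ hne₃
  obtain ⟨v, m, hvm⟩ := hcover l (by omega)
  have huv := hul.lt_of_isFurthestChord hvm
  rcases hvm.le.lt_or_eq with hvl | rfl
  · exact hasObstruction_of_loop_left_of_linked_chords hG hjk.adj hul.adj hvm.adj hjk.two_le huv
      hvl hvm.lt
  · exact hasObstruction_of_four_touching_chords hG haj.adj hjk.adj hul.adj hvm.adj haj.two_le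
      hjk.two_le hul.two_le hvm.two_le

/-- Choose chords greedily from the left, each reaching as far as possible. Each chord overlaps or
touches its predecessor, and four of them always contain an obstruction; if fewer already cover the
whole path, counting edges yields further chords. -/
theorem hasObstruction_of_pathGraph_le (hG : pathGraph n ≤ G) (hn : 2 ≤ n)
    (hcard : n + 3 ≤ G.edgeSet.ncard)
    (hcover : ∀ k : Fin n, (k : ℕ) + 1 < n → ∃ i j, G.Adj i j ∧ (i : ℕ) + 2 ≤ j ∧ i ≤ k ∧ k < j) :
    HasObstruction G := by
  replace hcover (k : Fin n) (hk : (k : ℕ) + 1 < n) := exists_isFurthestChord (hcover k hk)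
  obtain ⟨a, ha⟩ : ∃ a : Fin n, (a : ℕ) = 0 := ⟨⟨0, by omega⟩, rfl⟩
  obtain ⟨i, j, haj⟩ := hcover a (by omega)
  obtain rfl : i = a := by have := haj.le; omega
  by_cases hj : (j : ℕ) + 1 = n
  · obtain ⟨x, y, hxy, hxy₂, hne⟩ := exists_chord_notMem hG (by omega) [(i, j)]
      (by simp only [List.length_cons, List.length_nil]; omega)
    exact hasObstruction_of_hamiltonian_cycle_chord hG ha hj haj.adj hxy hxy₂ (by simpa using hne)
      hcard
  obtain ⟨k, l, hkl⟩ := hcover j (by omega)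
  rcases hkl.le.lt_or_eq with hkj | rfl
  · exact hasObstruction_of_overlapping_furthest_chords hG hcard hcover ha haj hkl hkj
  · exact hasObstruction_of_touching_furthest_chords hG hcard hcover ha haj hkl

end HamiltonPath

section Orientation

variable {V : Type*} {G : SimpleGraph V} {R : V → V → Prop}

theorem IsOrientation.exists_chord_over (hRG : IsOrientation G R) (hR : StronglyConnected R)
    {n : ℕ} (e : Fin n ≃ V) (hpath : ∀ i j : Fin n, (i : ℕ) + 1 = j → R (e i) (e j)) (k : Fin n)
    (hk : (k : ℕ) + 1 < n) : ∃ i j, G.Adj (e i) (e j) ∧ (i : ℕ) + 2 ≤ j ∧ i ≤ k ∧ k < j := by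
  obtain ⟨x, hx, y, hy, hxy⟩ := hR.exists_arc_of_mem_of_notMem (S := {x | k < e.symm x})
    (u := e ⟨k + 1, hk⟩) (v := e k)
    (by simp [← Fin.val_fin_lt]) (by simp)
  obtain ⟨j, rfl⟩ := e.surjective x
  obtain ⟨i, rfl⟩ := e.surjective y
  simp only [Set.mem_ofPred_eq, Equiv.symm_apply_apply, not_lt] at hx hy
  have hadj := (hRG.1 _ _ hxy).symm
  have hne : (i : ℕ) + 1 ≠ j := fun h => (hRG.2 _ _ hadj).1 (hpath i j h) hxy
  exact ⟨i, j, hadj, by omega, hy, hx⟩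

theorem Bridgeless.exists_orientation_diamLE [Fintype V] (hG : Bridgeless G)
    (hV : 2 ≤ Fintype.card V) (hcard : Fintype.card V + 3 ≤ G.edgeSet.ncard) :
    ∃ R : V → V → Prop, IsOrientation G R ∧ DiamLE R (Fintype.card V - 2) := by
  have hconn : StronglyConnected G.Adj := fun u v =>
    (G.reachable_iff_reflTransGen u v).1 (hG.1.preconnected u v)
  obtain ⟨R, -, hRG, hR⟩ := hG.exists_orientation_le hconn (fun _ _ h => h) fun _ _ h => .inl h
  by_cases hdiam : DiamLE R (Fintype.card V - 2)
  · exact ⟨R, hRG, hdiam⟩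
  obtain ⟨e, -, hpath⟩ := hR.exists_numbering hdiam
  have hpathGraph : pathGraph (Fintype.card V) ≤ G.comap e := by
    intro i j hij
    rcases pathGraph_adj.1 hij with h | h
    · exact hRG.1 _ _ (hpath i j h)
    · exact (hRG.1 _ _ (hpath j i h)).symm
  have hcard' : Fintype.card V + 3 ≤ (G.comap e).edgeSet.ncard := by
    rwa [← Nat.card_coe_set_eq, Nat.card_congr (Iso.comap e G).mapEdgeSet, Nat.card_coe_set_eq]
  obtain ⟨D, hD⟩ := hasObstruction_of_pathGraph_le hpathGraph hV hcard'
    (hRG.exists_chord_over hR e hpath)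
  exact (hD.map (Embedding.comap e.toEmbedding G)).exists_orientation hG

end Orientation

namespace Hgraph

variable {n : ℕ}

theorem exists_val_eq {k : ℕ} (hk : k < n) : ∃ i : Fin n, (i : ℕ) = k :=
  ⟨⟨k, hk⟩, rfl⟩

theorem adj_iff (hn : 5 ≤ n) {x y : Fin n} : (Hgraph n).Adj x y ↔
    ((x : ℕ) + 1 = y ∧ (y : ℕ) ≤ n - 2 ∨ (x : ℕ) = 0 ∧ (y : ℕ) = n - 2 ∨
      (x : ℕ) = n - 1 ∧ ((y : ℕ) = 1 ∨ (y : ℕ) = 2 ∨ (y : ℕ) = 3)) ∨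
    ((y : ℕ) + 1 = x ∧ (x : ℕ) ≤ n - 2 ∨ (y : ℕ) = 0 ∧ (x : ℕ) = n - 2 ∨
      (y : ℕ) = n - 1 ∧ ((x : ℕ) = 1 ∨ (x : ℕ) = 2 ∨ (x : ℕ) = 3)) := by
  rw [Hgraph, fromRel_adj, and_iff_right_iff_imp]
  rintro h rfl
  omega

theorem bridgeless (hn : 5 ≤ n) : Bridgeless (Hgraph n) := by
  let R (x y : Fin n) : Prop := ((x : ℕ) + 1 = y ∧ (y : ℕ) ≤ n - 2) ∨
    ((x : ℕ) = n - 2 ∧ (y : ℕ) = 0) ∨ ((x : ℕ) = 1 ∧ (y : ℕ) = n - 1) ∨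
    ((x : ℕ) = n - 1 ∧ (y : ℕ) = 3)
  obtain ⟨r, hr⟩ := exists_val_eq (show 0 < n by omega)
  have hto (x : Fin n) : Relation.ReflTransGen R x r := by
    refine reflTransGen_of_forall_exists_lt (fun x : Fin n =>
      if (x : ℕ) = 0 then 0 else if (x : ℕ) = n - 1 then n else n - x) (fun x hx => ?_) x
    obtain ⟨y, hy⟩ := exists_val_eq (n := n)
      (k := if (x : ℕ) = n - 2 then 0 else if (x : ℕ) = n - 1 then 3 else x + 1) (by grind)
    refine ⟨y, ?_, ?_⟩ <;> grind
  have hfrom (x : Fin n) : Relation.ReflTransGen R r x := by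
    refine Relation.reflTransGen_swap.1 (reflTransGen_of_forall_exists_lt
      (fun x : Fin n => (x : ℕ)) (fun x hx => ?_) x)
    obtain ⟨y, hy⟩ := exists_val_eq (n := n) (k := if (x : ℕ) = n - 1 then 1 else x - 1)
      (by grind)
    refine ⟨y, ?_, ?_⟩ <;> grind
  have : Nonempty (Fin n) := ⟨r⟩
  refine StronglyConnected.bridgeless (R := R) (fun x y => (hto x).trans (hfrom y))
    (fun x y h => (adj_iff hn).2 ?_) fun x y h h' => ?_
  · unfold R at h
    omega
  · unfold R at h h'
    omega

/-- The edges of `Hgraph n`: those of the cycle on `0, …, n - 2`, followed by the three at the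
extra vertex `n - 1`. -/
def edge (hn : 5 ≤ n) : Fin (n - 1) ⊕ Fin 3 → Sym2 (Fin n)
  | .inl k => s(⟨k, by omega⟩, ⟨if (k : ℕ) + 1 = n - 1 then 0 else k + 1, by split_ifs <;> omega⟩)
  | .inr j => s(⟨n - 1, by omega⟩, ⟨j + 1, by omega⟩)

theorem edge_injective (hn : 5 ≤ n) : Function.Injective (edge hn) := by
  rintro (k | k) (l | l) h <;>
    simp only [edge, Sym2.eq_iff, Fin.mk.injEq, Sum.inl.injEq, Sum.inr.injEq, reduceCtorEq]
      at h ⊢ <;>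
    grind

theorem range_edge (hn : 5 ≤ n) : Set.range (edge hn) = (Hgraph n).edgeSet := by
  ext ⟨x, y⟩
  simp only [Set.mem_range, Sum.exists, edge, Sym2.eq_iff, Fin.ext_iff]
  rw [mem_edgeSet, adj_iff hn]
  constructor
  · rintro (⟨k, hk⟩ | ⟨j, hj⟩)
    · split_ifs at hk <;> omega
    · omega
  · rintro ((h | h | h) | (h | h | h))
    · obtain ⟨k, hk⟩ := exists_val_eq (show (x : ℕ) < n - 1 by omega)
      exact .inl ⟨k, by grind⟩
    · obtain ⟨k, hk⟩ := exists_val_eq (show (y : ℕ) < n - 1 by omega)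
      exact .inl ⟨k, by grind⟩
    · obtain ⟨k, hk⟩ := exists_val_eq (show (y : ℕ) - 1 < 3 by omega)
      exact .inr ⟨k, by omega⟩
    · obtain ⟨k, hk⟩ := exists_val_eq (show (y : ℕ) < n - 1 by omega)
      exact .inl ⟨k, by grind⟩
    · obtain ⟨k, hk⟩ := exists_val_eq (show (x : ℕ) < n - 1 by omega)
      exact .inl ⟨k, by grind⟩
    · obtain ⟨k, hk⟩ := exists_val_eq (show (x : ℕ) - 1 < 3 by omega)
      exact .inr ⟨k, by omega⟩

theorem ncard_edgeSet (hn : 5 ≤ n) : (Hgraph n).edgeSet.ncard = n + 2 := by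
  rw [← range_edge hn, ← Nat.card_coe_set_eq, Nat.card_range_of_injective (edge_injective hn),
    Nat.card_sum, Nat.card_fin, Nat.card_fin]
  omega

/-- The arc `x → y` lies on the branch `3 → 4 → ⋯ → n - 2 → 0 → 1` of `Hgraph n`, seen as a
subdivision of `K₄` with branch vertices `1`, `3`, `2` and `n - 1`. -/
def BranchArc (x y : Fin n) : Prop :=
  (3 ≤ (x : ℕ) ∧ (x : ℕ) + 1 = y ∧ (y : ℕ) ≤ n - 2) ∨ ((x : ℕ) = n - 2 ∧ (y : ℕ) = 0) ∨
    ((x : ℕ) = 0 ∧ (y : ℕ) = 1)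

variable {R : Fin n → Fin n → Prop} {c d p q : Fin n}

/-- The inner vertices of the branch have degree two. -/
theorem arc_of_branchArc (hn : 5 ≤ n) (hRG : IsOrientation (Hgraph n) R) (hR : StronglyConnected R)
    (h01 : ∀ x y : Fin n, (x : ℕ) = 0 → (y : ℕ) = 1 → R x y) {x y : Fin n} (hxy : BranchArc x y) :
    R x y := by
  have : Nontrivial (Fin n) := Fin.nontrivial_iff_two_le.2 (by omega)
  have hstep {x y z : Fin n} (hxy : BranchArc x y) (hyz : BranchArc y z) (h : R y z) : R x y := by
    obtain ⟨w, hwy⟩ := hR.swap.exists_arc_from y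
    have hadj := (adj_iff hn).1 (hRG.1 w y hwy)
    unfold BranchArc at hxy hyz
    obtain rfl | rfl : w = x ∨ w = z := by omega
    exacts [hwy, (hRG.asymm h hwy).elim]
  obtain ⟨z, hz⟩ := exists_val_eq (show 0 < n by omega)
  obtain ⟨o, ho⟩ := exists_val_eq (show 1 < n by omega)
  have hz1 {x : Fin n} (hx : (x : ℕ) = n - 2) : R x z :=
    hstep (.inr (.inl ⟨hx, hz⟩)) (.inr (.inr ⟨hz, ho⟩)) (h01 z o hz ho)
  have hpath (k : ℕ) : ∀ x y : Fin n, 3 ≤ (x : ℕ) → (x : ℕ) + 1 = y → (y : ℕ) + k = n - 2 →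
      R x y := by
    induction k with
    | zero =>
      intro x y hx hxy hy
      exact hstep (.inl ⟨hx, hxy, by omega⟩) (.inr (.inl ⟨by omega, hz⟩)) (hz1 (by omega))
    | succ k ih =>
      intro x y hx hxy hy
      obtain ⟨w, hw⟩ := exists_val_eq (show (y : ℕ) + 1 < n by omega)
      exact hstep (.inl ⟨hx, hxy, by omega⟩) (.inl ⟨by omega, hw.symm, by omega⟩)
        (ih y w (by omega) hw.symm (by omega))
  rcases hxy with ⟨hx, hxy, hy⟩ | ⟨hx, hy⟩ | ⟨hx, hy⟩
  · exact hpath (n - 2 - y) x y hx hxy (by omega)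
  · exact Fin.ext (hy.trans hz.symm) ▸ hz1 hx
  · exact h01 x y hx hy

/-- An orientation of `Hgraph n` in which the branch runs from `c = 3` to `d = 1`, and the remaining
two branch vertices `2` and `n - 1` of the subdivided `K₄` are called `p` and `q` so that `p → q`.
Reversing all arcs brings every strong orientation into this form. -/
structure IsNormalized (R : Fin n → Fin n → Prop) (c d p q : Fin n) : Prop where
  isOrientation : IsOrientation (Hgraph n) R
  strong : StronglyConnected R
  val_c : (c : ℕ) = 3
  val_d : (d : ℕ) = 1
  val_pq : (p : ℕ) = 2 ∧ (q : ℕ) = n - 1 ∨ (p : ℕ) = n - 1 ∧ (q : ℕ) = 2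
  branch : ∀ x y, BranchArc x y → R x y
  arc : R p q

namespace IsNormalized

theorem arc_cases (hn : 5 ≤ n) (h : IsNormalized R c d p q) {x y : Fin n} (hxy : R x y) :
    BranchArc x y ∨ (x = p ∧ y = q) ∨ ((x = c ∨ x = d) ∧ (y = p ∨ y = q)) ∨
      ((x = p ∨ x = q) ∧ (y = c ∨ y = d)) := by
  obtain ⟨hRG, -, hc, hd, hp, hbranch, hpq⟩ := h
  have hyx : ¬ BranchArc y x := fun h => hRG.asymm hxy (hbranch y x h)
  have hqp : ¬ (x = q ∧ y = p) := by
    rintro ⟨rfl, rfl⟩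
    exact hRG.asymm hpq hxy
  have hadj := (adj_iff hn).1 (hRG.1 x y hxy)
  unfold BranchArc at hyx ⊢
  rcases hp with hp | hp <;> rcases hadj with (h | h | h) | (h | h | h) <;> omega

/-- No branch vertex is a source or a sink. -/
theorem arcs_at_branch_vertices (hn : 5 ≤ n) (h : IsNormalized R c d p q) :
    (R d p ∨ R d q) ∧ (R p c ∨ R q c) ∧ (R c p ∨ R d p) ∧ (R q c ∨ R q d) := by
  have : Nontrivial (Fin n) := Fin.nontrivial_iff_two_le.2 (by omega)
  have ⟨_, _, hc, hd, hp, _, _⟩ := h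
  have hcases (x y : Fin n) (hxy : R x y) := h.arc_cases hn hxy
  unfold BranchArc at hcases
  refine ⟨?_, ?_, ?_, ?_⟩
  · obtain ⟨w, hw⟩ := h.strong.exists_arc_from d
    have := hcases d w hw
    obtain rfl | rfl : w = p ∨ w = q := by omega
    exacts [.inl hw, .inr hw]
  · obtain ⟨w, hw⟩ := h.strong.swap.exists_arc_from c
    have := hcases w c hw
    obtain rfl | rfl : w = p ∨ w = q := by omega
    exacts [.inl hw, .inr hw]
  · obtain ⟨w, hw⟩ := h.strong.swap.exists_arc_from p
    have := hcases w p hw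
    obtain rfl | rfl : w = c ∨ w = d := by omega
    exacts [.inl hw, .inr hw]
  · obtain ⟨w, hw⟩ := h.strong.exists_arc_from q
    have := hcases q w hw
    obtain rfl | rfl : w = c ∨ w = d := by omega
    exacts [.inl hw, .inr hw]

theorem exists_eq_on_branch (hn : 5 ≤ n) (h : IsNormalized R c d p q) (γ δ α β s : ℤ) :
    ∃ φ : Fin n → ℤ, φ c = γ ∧ φ d = δ ∧ φ p = α ∧ φ q = β ∧
      (∀ x, BranchArc c x → φ x = s + 1) ∧ (∀ x, BranchArc x d → φ x = s + n - 4) ∧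
      ∀ x y, BranchArc x y → x ≠ c → y ≠ d → φ y = φ x + 1 := by
  have ⟨_, _, hc, hd, hp, _, _⟩ := h
  obtain ⟨φ, hφ⟩ : ∃ φ : Fin n → ℤ, ∀ x, φ x = if x = p then α else if x = q then β
      else if x = c then γ else if x = d then δ
      else if (x : ℕ) = 0 then s + n - 4 else s + x - 3 := ⟨_, fun _ => rfl⟩
  have hinner {x : Fin n} (h0 : (x : ℕ) = 0 ∨ 4 ≤ (x : ℕ) ∧ (x : ℕ) ≤ n - 2) :
      φ x = if (x : ℕ) = 0 then s + n - 4 else s + x - 3 := by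
    rw [hφ, if_neg, if_neg, if_neg, if_neg] <;> rintro rfl <;> omega
  obtain ⟨hpq, hcp, hcq, hdp, hdq, hdc⟩ :
    p ≠ q ∧ c ≠ p ∧ c ≠ q ∧ d ≠ p ∧ d ≠ q ∧ d ≠ c := by omega
  unfold BranchArc
  refine ⟨φ, by simp only [hφ, if_true, hcp, hcq, if_false],
    by simp only [hφ, if_true, hdp, hdq, hdc, if_false], by simp only [hφ, if_true],
    by simp only [hφ, if_true, hpq.symm, if_false], fun x hx => ?_, fun x hx => ?_,
    fun x y hxy hxc hyd => ?_⟩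
  · rw [hinner (by omega)]
    split_ifs <;> omega
  · rw [hinner (by omega)]
    split_ifs <;> omega
  · rw [hinner (by omega), hinner (by omega)]
    split_ifs <;> omega

/-- A potential `φ` growing by at most one along arcs is described by its values `γ, δ, α, β` at the
branch vertices and its value `s + k` at distance `k` from `c` inside the branch. -/
theorem exists_potential (hn : 5 ≤ n) (h : IsNormalized R c d p q) {γ δ α β s : ℤ}
    (hγ : s ≤ γ) (hδ : δ ≤ s + n - 3) (hαβ : β ≤ α + 1)
    (hcp : R c p ∧ α ≤ γ + 1 ∨ R p c ∧ γ ≤ α + 1) (hcq : R c q ∧ β ≤ γ + 1 ∨ R q c ∧ γ ≤ β + 1)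
    (hdp : R d p ∧ α ≤ δ + 1 ∨ R p d ∧ δ ≤ α + 1) (hdq : R d q ∧ β ≤ δ + 1 ∨ R q d ∧ δ ≤ β + 1) :
    ∃ φ : Fin n → ℤ, (∀ x y, R x y → φ y ≤ φ x + 1) ∧
      {γ, δ, α, β, s + 1, s + n - 4} ⊆ Set.range φ := by
  obtain ⟨φ, rfl, rfl, rfl, rfl, hcx, hxd, hxy⟩ := h.exists_eq_on_branch hn γ δ α β s
  refine ⟨φ, fun x y harc => ?_, ?_⟩
  · have := h.isOrientation.asymm harc
    rcases h.arc_cases hn harc with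
      hb | ⟨rfl, rfl⟩ | ⟨rfl | rfl, rfl | rfl⟩ | ⟨rfl | rfl, rfl | rfl⟩
    · rcases eq_or_ne x c with rfl | hxc
      · linarith [hcx y hb]
      rcases eq_or_ne y d with rfl | hyd
      · linarith [hxd x hb]
      · exact (hxy x y hb hxc hyd).le
    · exact hαβ
    all_goals grind
  · obtain ⟨x, hx⟩ := exists_val_eq (n := n) (k := if n = 5 then 0 else 4) (by grind)
    obtain ⟨y, hy⟩ := exists_val_eq (show 0 < n by omega)
    have ⟨_, _, hc, hd, _, _, _⟩ := h
    have hbx : BranchArc c x := by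
      unfold BranchArc
      split_ifs at hx <;> omega
    have hbd : BranchArc y d := .inr (.inr ⟨hy, hd⟩)
    rw [← hcx x hbx, ← hxd y hbd]
    simp [Set.insert_subset_iff]

theorem not_diamLE_of_values (hn : 5 ≤ n) (h : IsNormalized R c d p q) (γ δ α β s u v : ℤ)
    (huv : v = u + (n - 1)) (hγ : s ≤ γ) (hδ : δ ≤ s + n - 3) (hαβ : β ≤ α + 1)
    (hdp : R d p ∧ α ≤ δ + 1 ∨ R p d ∧ δ ≤ α + 1) (hdq : R d q ∧ β ≤ δ + 1 ∨ R q d ∧ δ ≤ β + 1)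
    (hcp : R c p ∧ α ≤ γ + 1 ∨ R p c ∧ γ ≤ α + 1) (hcq : R c q ∧ β ≤ γ + 1 ∨ R q c ∧ γ ≤ β + 1)
    (hu : u ∈ ({γ, δ, α, β, s + 1, s + n - 4} : Set ℤ))
    (hv : v ∈ ({γ, δ, α, β, s + 1, s + n - 4} : Set ℤ)) : ¬ DiamLE R (n - 2) := by
  intro hdiam
  obtain ⟨φ, hφ, hrange⟩ := h.exists_potential hn hγ hδ hαβ hcp hcq hdp hdq
  obtain ⟨x, hx⟩ := hrange hu
  obtain ⟨y, hy⟩ := hrange hv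
  have := hdiam.le_add_of_forall_le_add_one hφ x y
  omega

theorem orientation_cases (hn : 5 ≤ n) (h : IsNormalized R c d p q) :
    (R d p ∧ R d q ∧ R c p ∧ R q c) ∨ (R d p ∧ R d q ∧ R p c ∧ R q c) ∨
      (R d p ∧ R q d ∧ R p c ∧ R c q) ∨ (R d p ∧ R q d ∧ R p c ∧ R q c) ∨
      (R d p ∧ R q d ∧ R c p ∧ R q c) ∨ (R p d ∧ R d q ∧ R c p ∧ R q c) := by
  have ⟨hRG, _, hc, hd, hp, _, _⟩ := h
  have hasymm (x y : Fin n) : R x y → ¬ R y x := hRG.asymm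
  have hdp : R d p ∨ R p d := hRG.arc_or_arc ((adj_iff hn).2 (by omega))
  have hdq : R d q ∨ R q d := hRG.arc_or_arc ((adj_iff hn).2 (by omega))
  have hcp : R c p ∨ R p c := hRG.arc_or_arc ((adj_iff hn).2 (by omega))
  have hcq : R c q ∨ R q c := hRG.arc_or_arc ((adj_iff hn).2 (by omega))
  have := h.arcs_at_branch_vertices hn
  grind

/-- In each of the six cases the values of the potential number the vertices so that every arc
rises by at most one; the two values differing by `n - 1` belong to the first and last vertex. -/
theorem not_diamLE (hn : 5 ≤ n) (h : IsNormalized R c d p q) : ¬ DiamLE R (n - 2) := by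
  rcases h.orientation_cases hn with ⟨hdp, hdq, hcp, hqc⟩ | ⟨hdp, hdq, hpc, hqc⟩ |
    ⟨hdp, hqd, hpc, hcq⟩ | ⟨hdp, hqd, hpc, hqc⟩ | ⟨hdp, hqd, hcp, hqc⟩ | ⟨hpd, hdq, hcp, hqc⟩
  · exact h.not_diamLE_of_values hn 2 (n - 1) 0 1 2 0 (n - 1) (by omega) (by omega) (by omega)
      (by omega) (.inl ⟨hdp, by omega⟩) (.inl ⟨hdq, by omega⟩) (.inl ⟨hcp, by omega⟩)
      (.inr ⟨hqc, by omega⟩) (by simp) (by simp)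
  · exact h.not_diamLE_of_values hn 1 (n - 2) (n - 1) 0 1 0 (n - 1) (by omega) (by omega)
      (by omega) (by omega) (.inl ⟨hdp, by omega⟩) (.inl ⟨hdq, by omega⟩) (.inr ⟨hpc, by omega⟩)
      (.inr ⟨hqc, by omega⟩) (by simp) (by simp)
  · exact h.not_diamLE_of_values hn 3 1 2 0 3 0 (3 + n - 4) (by omega) (by omega) (by omega)
      (by omega) (.inl ⟨hdp, by omega⟩) (.inr ⟨hqd, by omega⟩) (.inr ⟨hpc, by omega⟩)
      (.inl ⟨hcq, by omega⟩) (by simp) (by simp)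
  · exact h.not_diamLE_of_values hn 0 (n - 3) (n - 2) (n - 1) 0 0 (n - 1) (by omega) (by omega)
      (by omega) (by omega) (.inl ⟨hdp, by omega⟩) (.inr ⟨hqd, by omega⟩) (.inr ⟨hpc, by omega⟩)
      (.inr ⟨hqc, by omega⟩) (by simp) (by simp)
  · exact h.not_diamLE_of_values hn (n - 1) (n - 4) (n - 3) (n - 2) (-1) 0 (n - 1) (by omega)
      (by omega) (by omega) (by omega) (.inl ⟨hdp, by omega⟩) (.inr ⟨hqd, by omega⟩)
      (.inl ⟨hcp, by omega⟩) (.inr ⟨hqc, by omega⟩) (by simp) (by simp)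
  · exact h.not_diamLE_of_values hn (n - 2) (n - 4) (n - 1) (n - 3) (-1) 0 (n - 1) (by omega)
      (by omega) (by omega) (by omega) (.inr ⟨hpd, by omega⟩) (.inl ⟨hdq, by omega⟩)
      (.inl ⟨hcp, by omega⟩) (.inr ⟨hqc, by omega⟩) (by simp) (by simp)

end IsNormalized

theorem not_diamLE (hn : 5 ≤ n) (hRG : IsOrientation (Hgraph n) R) : ¬ DiamLE R (n - 2) := by
  obtain ⟨z, hz⟩ := exists_val_eq (show 0 < n by omega)
  obtain ⟨d, hd⟩ := exists_val_eq (show 1 < n by omega)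
  wlog h01 : R z d generalizing R
  · have h10 := (hRG.arc_or_arc ((adj_iff hn).2 (by omega))).resolve_left h01
    exact fun hdiam => this hRG.swap h10 hdiam.swap
  intro hdiam
  have hR := hdiam.stronglyConnected
  obtain ⟨p, hp⟩ := exists_val_eq (show 2 < n by omega)
  obtain ⟨c, hc⟩ := exists_val_eq (show 3 < n by omega)
  obtain ⟨q, hq⟩ := exists_val_eq (show n - 1 < n by omega)
  have hbranch (x y : Fin n) : BranchArc x y → R x y := arc_of_branchArc hn hRG hR fun x y hx hy =>
    by rwa [Fin.ext (hx.trans hz.symm), Fin.ext (hy.trans hd.symm)]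
  rcases hRG.arc_or_arc ((adj_iff hn).2 (by omega) : (Hgraph n).Adj p q) with hpq | hqp
  · exact IsNormalized.not_diamLE hn ⟨hRG, hR, hc, hd, .inl ⟨hp, hq⟩, hbranch, hpq⟩ hdiam
  · exact IsNormalized.not_diamLE hn ⟨hRG, hR, hc, hd, .inr ⟨hq, hp⟩, hbranch, hqp⟩ hdiam

end Hgraph

theorem stmt_14 (n : ℕ) (hn : 5 ≤ n) :
    (∀ (V : Type) [Fintype V] (G : SimpleGraph V), Fintype.card V = n →
      Bridgeless G → n + 3 ≤ G.edgeSet.ncard →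
      ∃ R : V → V → Prop, IsOrientation G R ∧ DiamLE R (n - 2)) ∧
    (∃ G : SimpleGraph (Fin n), Bridgeless G ∧ G.edgeSet.ncard = n + 2 ∧
      ¬ ∃ R : Fin n → Fin n → Prop, IsOrientation G R ∧ DiamLE R (n - 2)) := by
  refine ⟨fun V _ G hV hG hcard => ?_, Hgraph n, Hgraph.bridgeless hn, Hgraph.ncard_edgeSet hn,
    fun ⟨_, hRG, hdiam⟩ => Hgraph.not_diamLE hn hRG hdiam⟩
  subst hV
  exact hG.exists_orientation_diamLE (by omega) hcard
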